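/- If X is a simple n-od (for some positive integer n ≥ 3) and p ∈ X, then (X,p) has unique hyperspace C(p,X) in the class 𝒯 of trees; that is, for every tree Y and q ∈ Y such that C(p,X) is homeomorphic to C(q,Y), there is a homeomorphism 𝔥 : X → Y with 𝔥(p) = q. -/

import Mathlib

open Set Topology TopologicalSpace

universe u

/-- `IndDimLE m α t` means that the small inductive dimension of `α` is at most `m - 1`.
In particular `IndDimLE 0 α t` means `α` is empty (dimension `-1`). -/
def IndDimLE : ℕ → (α : Type u) → TopologicalSpace α → Prop
  | 0, α, _ => IsEmpty α
  | n + 1, α, t =>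
      ∀ (x : α) (U : Set α), @IsOpen α t U → x ∈ U →
        ∃ V : Set α, @IsOpen α t V ∧ x ∈ V ∧ V ⊆ U ∧
          IndDimLE n (↥(@frontier α t V))
            (TopologicalSpace.induced (Subtype.val : ↥(@frontier α t V) → α) t)

/-- The small inductive dimension of a topological space, as an integer
(with junk value if the dimension is infinite). -/
noncomputable def indDim (α : Type u) [t : TopologicalSpace α] : ℤ :=
  sInf {d : ℤ | ∃ m : ℕ, d = (m : ℤ) - 1 ∧ IndDimLE m α t}

section Defs

variable {X : Type u} [TopologicalSpace X]

/-- `A` is an arc, i.e. homeomorphic to `[0,1]`. -/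
def IsArcSet (A : Set X) : Prop :=
  Nonempty (↥A ≃ₜ ↥(Icc (0 : ℝ) 1))

/-- `A` is an arc with end points `a` and `b`. -/
def IsArcFromTo (A : Set X) (a b : X) : Prop :=
  ∃ h : ↥(Icc (0 : ℝ) 1) ≃ₜ ↥A,
    ((h ⟨0, by norm_num⟩ : ↥A) : X) = a ∧ ((h ⟨1, by norm_num⟩ : ↥A) : X) = b

/-- `a` is an end point of the arc `A`. -/
def IsArcEndpoint (A : Set X) (a : X) : Prop := ∃ b, IsArcFromTo A a b

/-- The points of the arc `A` which are not end points of `A`. -/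
def arcInterior (A : Set X) : Set X := {x ∈ A | ¬ IsArcEndpoint A x}

/-- `N` is a simple `n`-od with vertex `v`: the union of `n` arcs emanating from `v`
and otherwise disjoint from each other. -/
def IsSimpleNod (n : ℕ) (N : Set X) (v : X) : Prop :=
  0 < n ∧ ∃ A : Fin n → Set X, (∀ i, IsArcSet (A i)) ∧ (⋃ i, A i) = N ∧
    (∀ i, IsArcEndpoint (A i) v) ∧ ∀ i j, i ≠ j → A i ∩ A j = {v}

/-- `x` has order `n` in the subspace `S`: `x` has a closed neighborhood in `S`
which is a simple `n`-od having `x` as the vertex. -/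
def HasOrdIn (S : Set X) (x : X) (n : ℕ) : Prop :=
  ∃ N : Set X, N ⊆ S ∧ IsClosed N ∧ (∃ U : Set X, IsOpen U ∧ x ∈ U ∧ U ∩ S ⊆ N) ∧
    IsSimpleNod n N x

/-- The order of `x` in the subspace `S`. -/
noncomputable def ordIn (S : Set X) (x : X) : ℕ := sInf {n | HasOrdIn S x n}

/-- End points (order `1`) of the subspace `S`. -/
def endPtsIn (S : Set X) : Set X := {x ∈ S | HasOrdIn S x 1}

/-- Ordinary points (order `2`) of the subspace `S`. -/
def ordinaryIn (S : Set X) : Set X := {x ∈ S | HasOrdIn S x 2}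

/-- Ramification points (order `≥ 3`) of the subspace `S`. -/
def ramifIn (S : Set X) : Set X := {x ∈ S | ∃ n, 3 ≤ n ∧ HasOrdIn S x n}

/-- Vertices (points of order `≠ 2`) of the subspace `S`. -/
def verticesIn (S : Set X) : Set X := {x ∈ S | ¬ HasOrdIn S x 2}

/-- `e` is an edge of the subspace `S`: an arc joining two vertices of `S` and
containing no more than two vertices of `S`. -/
def IsEdgeIn (S : Set X) (e : Set X) : Prop :=
  e ⊆ S ∧ ∃ a b, a ∈ verticesIn S ∧ b ∈ verticesIn S ∧ IsArcFromTo e a b ∧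
    e ∩ verticesIn S ⊆ {a, b}

/-- `S` is a simple closed curve. -/
def IsSimpleClosedCurve (S : Set X) : Prop := Nonempty (↥S ≃ₜ Circle)

end Defs

/-- `X` is an arc (as a space). -/
def IsArcSpace (X : Type u) [TopologicalSpace X] : Prop :=
  Nonempty (X ≃ₜ ↥(Icc (0 : ℝ) 1))

/-- `X` is a finite graph: a continuum which is the union of finitely many arcs, any two
of which are either disjoint or intersect only in one or both of their end points. -/
def IsFiniteGraph (X : Type u) [MetricSpace X] : Prop :=
  CompactSpace X ∧ ConnectedSpace X ∧ Nonempty X ∧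
    ∃ 𝒜 : Finset (Set X), (∀ A ∈ 𝒜, IsArcSet A) ∧ ⋃₀ (𝒜 : Set (Set X)) = univ ∧
      ∀ A ∈ 𝒜, ∀ B ∈ 𝒜, A ≠ B → ∀ x ∈ A ∩ B, IsArcEndpoint A x ∧ IsArcEndpoint B x

/-- `X` is a tree: a finite graph without simple closed curves. -/
def IsTree (X : Type u) [MetricSpace X] : Prop :=
  IsFiniteGraph X ∧ ∀ S : Set X, ¬ IsSimpleClosedCurve S

/-- `X` is neither an arc nor a simple `n`-od. -/
def NotArcNotNod (X : Type u) [MetricSpace X] : Prop :=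
  ¬ IsArcSpace X ∧ ∀ (n : ℕ) (v : X), ¬ IsSimpleNod n (univ : Set X) v

/-- `T(X)`: the union of all edges of `X` disjoint from the set of end points of `X`. -/
def Tpart (X : Type u) [MetricSpace X] : Set X :=
  ⋃₀ {e : Set X | IsEdgeIn (univ : Set X) e ∧ e ∩ endPtsIn (univ : Set X) = ∅}

/-- `Sub_p(T(X))`: subtrees of `T(X)` containing `p` (subcontinua of `T(X)` all of whose
edges are edges of `X`). -/
def SubTreesP (X : Type u) [MetricSpace X] (p : X) : Set (Set X) :=
  {Y | Y ⊆ Tpart X ∧ p ∈ Y ∧ IsCompact Y ∧ IsConnected Y ∧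
    ∀ e : Set X, IsEdgeIn Y e → IsEdgeIn (univ : Set X) e}

/-- Subtrees of the tree `X`. -/
def Subtrees (X : Type u) [MetricSpace X] : Set (Set X) :=
  {Y | IsCompact Y ∧ IsConnected Y ∧
    ∀ e : Set X, IsEdgeIn Y e → IsEdgeIn (univ : Set X) e}

/-- The smallest subtree of `X` containing `a` and `b`. -/
def treeHull (X : Type u) [MetricSpace X] (a b : X) : Set X :=
  ⋂₀ {Y | Y ∈ Subtrees X ∧ a ∈ Y ∧ b ∈ Y}

/-- The hyperspace `C(p,X)` of subcontinua of `X` containing `p`,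
with the Hausdorff metric. -/
def CP (X : Type u) [MetricSpace X] (p : X) : Type u :=
  {A : NonemptyCompacts X // IsConnected (A : Set X) ∧ p ∈ (A : Set X)}

noncomputable instance (X : Type u) [MetricSpace X] (p : X) : MetricSpace (CP X p) :=
  inferInstanceAs (MetricSpace
    {A : NonemptyCompacts X // IsConnected (A : Set X) ∧ p ∈ (A : Set X)})

/-- The underlying subset of `X` of an element of `C(p,X)`. -/
def CP.set {X : Type u} [MetricSpace X] {p : X} (A : CP X p) : Set X := (A.1 : Set X)

/-- `U_n(X)`: elements of `C(p,X)` having a neighborhood in `C(p,X)` homeomorphic to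
the `n`-cell `[0,1]^n`. -/
def Un (X : Type u) [MetricSpace X] (p : X) (n : ℕ) : Set (CP X p) :=
  {A | ∃ N : Set (CP X p), N ∈ 𝓝 A ∧ Nonempty (↥N ≃ₜ (Fin n → ↥(Icc (0 : ℝ) 1)))}

/-- `𝒰(X) = ⋃ₙ U_n(X)`. -/
def UnionUn (X : Type u) [MetricSpace X] (p : X) : Set (CP X p) := ⋃ n : ℕ, Un X p n

/-- The edges of `X` which are not edges of `Y` and intersect `Y`. -/
def incidentE (X : Type u) [MetricSpace X] (Y : Set X) : Set (Set X) :=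
  {e | IsEdgeIn (univ : Set X) e ∧ ¬ IsEdgeIn Y e ∧ (e ∩ Y).Nonempty}

/-- `U_Y`: elements of `C(p,X)` of the form `Y` together with exactly one interior point
of each edge of `X` incident on `Y`. -/
def UofY (X : Type u) [MetricSpace X] (p : X) (Y : Set X) : Set (CP X p) :=
  {B | ∃ f : ↥(incidentE X Y) → X,
    (∀ e : ↥(incidentE X Y), f e ∈ arcInterior (e : Set X)) ∧ B.set = Y ∪ range f}

/-- `(X,p)` has unique hyperspace `C(p,X)` in the class of trees. -/
def UniqueHyperspaceInTrees (X : Type u) [MetricSpace X] (p : X) : Prop :=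
  ∀ (Y : Type u) [MetricSpace Y], IsTree Y → ∀ q : Y,
    Nonempty (CP X p ≃ₜ CP Y q) → ∃ 𝔥 : X ≃ₜ Y, 𝔥 p = q

/-!
Both spaces are presented as rooted trees of arcs, with roots `p` and `q`. A subcontinuum containing
the root is recorded by the length to which it has grown along each arc, so `C(q, Y)` is the
polyhedron of functions `W → [0, 1]` on the non-root vertices which are positive at a vertex only if
they are `1` at its parent. By invariance of dimension this polyhedron determines the dimensions of
its open cells. These are the numbers of outer boundary vertices of the parent-closed sets of
non-leaves. For a rooted `n`-od with `n ≥ 3` the numbers determine the rooted tree among those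
without vertices having exactly one child, and any tree can be presented in that way by suppressing
such vertices.
-/

section InvarianceOfDimension

open MeasureTheory

theorem det_eq_sum_det_one_add_smul_div {K V : Type*} [Field K] [AddCommGroup V] [Module K V]
    [FiniteDimensional K V] {s : ℕ → K} (hs : InjOn s (Finset.range (Module.finrank K V + 1)))
    (A : V →ₗ[K] V) :
    LinearMap.det A = ∑ i ∈ Finset.range (Module.finrank K V + 1),
      LinearMap.det (1 + s i • A) /
        ∏ j ∈ (Finset.range (Module.finrank K V + 1)).erase i, (s i - s j) := by
  let b := Module.finBasis K V
  let M := LinearMap.toMatrix b b A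
  let P : Polynomial K := ((Polynomial.X : Polynomial K) • M.map Polynomial.C +
    (1 : Matrix _ _ K).map Polynomial.C).det
  have coeff_P : P.coeff (Module.finrank K V) = LinearMap.det A := by
    rw [← LinearMap.det_toMatrix b, ← Polynomial.coeff_det_X_add_C_card M 1, Fintype.card_fin]
  have degree_P : P.degree < (Finset.range (Module.finrank K V + 1)).card := by
    have h := Polynomial.natDegree_det_X_add_C_le M 1
    rw [Fintype.card_fin] at h
    rw [Finset.card_range]
    exact Polynomial.degree_le_natDegree.trans_lt (mod_cast Nat.lt_succ_of_le h)
  have eval_P (t : K) : P.eval t = LinearMap.det (1 + t • A) := by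
    rw [← LinearMap.det_toMatrix b, ← Polynomial.coe_evalRingHom, RingHom.map_det]
    congr 1
    ext i j
    rcases eq_or_ne i j with rfl | hij <;> simp [M, LinearMap.toMatrix_one, *] <;> ring
  rw [← coeff_P]
  simpa only [Finset.card_range, Nat.add_sub_cancel, eval_P] using
    Lagrange.coeff_eq_sum hs degree_P

variable {E F : Type*} [NormedAddCommGroup E] [NormedSpace ℝ E] [NormedAddCommGroup F]
  [NormedSpace ℝ F]

theorem bijective_id_add_smul_of_lipschitzWith [CompleteSpace E] {H : E → E} {C : NNReal}
    (hH : LipschitzWith C H) {s : ℝ} (hs : ‖s‖₊ * C < 1) :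
    Function.Bijective fun x => x + s • H x := by
  have happrox : ApproximatesLinearOn (fun x => x + s • H x)
      (ContinuousLinearEquiv.refl ℝ E : E →L[ℝ] E) univ (‖s‖₊ * C) := by
    refine LipschitzOnWith.approximatesLinearOn (LipschitzWith.lipschitzOnWith ?_)
    simpa [Function.comp_def, Pi.sub_def] using (lipschitzWith_smul s).comp hH
  have hc : Subsingleton E ∨
      ‖s‖₊ * C < ‖((ContinuousLinearEquiv.refl ℝ E).symm : E →L[ℝ] E)‖₊⁻¹ := by
    rcases subsingleton_or_nontrivial E with hE | hE
    · exact .inl hE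
    · right
      rwa [show ‖((ContinuousLinearEquiv.refl ℝ E).symm : E →L[ℝ] E)‖₊ = 1 from
        NNReal.eq ContinuousLinearMap.norm_id, inv_one]
  exact ⟨injOn_univ.1 (happrox.injOn hc), happrox.surjective hc⟩

theorem det_one_add_pos [FiniteDimensional ℝ E] {A : E →L[ℝ] E} (hA : ‖A‖ < 1) :
    0 < (1 + A).det := by
  have : CompleteSpace E := FiniteDimensional.complete ℝ E
  have hne : ∀ t ∈ Icc (0 : ℝ) 1, (1 + t • A).det ≠ 0 := by
    intro t ht
    have hn : ‖-(t • A)‖ < 1 := by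
      rw [norm_neg, norm_smul, Real.norm_of_nonneg ht.1]
      exact (mul_le_of_le_one_left (norm_nonneg A) ht.2).trans_lt hA
    have hu : IsUnit (1 + t • A) := by simpa using (Units.oneSub _ hn).isUnit
    exact ((LinearMap.isUnit_iff_isUnit_det _).1
      (hu.map (ContinuousLinearMap.toLinearMapRingHom (R₁ := ℝ) (M₁ := E)))).ne_zero
  have hcont : Continuous fun t : ℝ => (1 + t • A).det :=
    ContinuousLinearMap.continuous_det.comp (by fun_prop)
  by_contra! hneg
  obtain ⟨t, ht, h⟩ := intermediate_value_Icc' zero_le_one hcont.continuousOn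
    (show (0 : ℝ) ∈ Icc ((1 + (1 : ℝ) • A).det) ((1 + (0 : ℝ) • A).det) from
      ⟨by simpa only [one_smul] using hneg, by simp [ContinuousLinearMap.det]⟩)
  exact hne t ht h

theorem setIntegral_det_one_add_smul_fderiv [FiniteDimensional ℝ E] [MeasurableSpace E]
    [BorelSpace E] (μ : Measure E) [μ.IsAddHaarMeasure] {H : E → E} (hH : Differentiable ℝ H)
    {C : NNReal} (lH : LipschitzWith C H) {S : Set E} (hS : MeasurableSet S) {s : ℝ}
    (hs : ‖s‖₊ * C < 1) :
    ∫ x in S, (1 + s • fderiv ℝ H x).det ∂μ = μ.real ((fun x => x + s • H x) '' S) := by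
  have : CompleteSpace E := FiniteDimensional.complete ℝ E
  have hderiv (x : E) : HasFDerivAt (fun x => x + s • H x) (1 + s • fderiv ℝ H x) x :=
    (hasFDerivAt_id x).add ((hH x).hasFDerivAt.const_smul s)
  have hpos (x : E) : 0 < (1 + s • fderiv ℝ H x).det := by
    refine det_one_add_pos (lt_of_le_of_lt ?_ (show ‖s‖ * (C : ℝ) < 1 from mod_cast hs))
    rw [norm_smul]
    gcongr
    exact norm_fderiv_le_of_lipschitz ℝ lH
  have h := integral_image_eq_integral_abs_det_fderiv_smul μ hS
    (fun x (_ : x ∈ S) => (hderiv x).hasFDerivWithinAt)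
    (bijective_id_add_smul_of_lipschitzWith lH hs).1.injOn (fun _ => (1 : ℝ))
  simpa only [smul_eq_mul, mul_one, abs_of_pos (hpos _), setIntegral_const, eq_comm] using h

theorem integrableOn_det_one_add_smul_fderiv [FiniteDimensional ℝ E] [MeasurableSpace E]
    [BorelSpace E] (μ : Measure E) [IsLocallyFiniteMeasure μ] {H : E → E}
    (hH : ContDiff ℝ 1 H) {S : Set E} (hS : Bornology.IsBounded S) (s : ℝ) :
    IntegrableOn (fun x => (1 + s • fderiv ℝ H x).det) S μ := by
  have : ProperSpace E := FiniteDimensional.proper ℝ E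
  have hcont : Continuous fun x => (1 + s • fderiv ℝ H x).det := by
    have := hH.continuous_fderiv one_ne_zero
    exact ContinuousLinearMap.continuous_det.comp (by fun_prop)
  exact (hcont.continuousOn.integrableOn_compact hS.isCompact_closure).mono_set subset_closure

theorem setIntegral_det_fderiv_eq_of_eqOn_compl [FiniteDimensional ℝ E] [MeasurableSpace E]
    [BorelSpace E] (μ : Measure E) [μ.IsAddHaarMeasure] {G H : E → E} (hG : ContDiff ℝ 1 G)
    (hH : ContDiff ℝ 1 H) {C : NNReal} (lG : LipschitzWith C G) (lH : LipschitzWith C H)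
    {S : Set E} (hS : MeasurableSet S) (hSb : Bornology.IsBounded S) (hGH : EqOn G H Sᶜ) :
    ∫ x in S, (fderiv ℝ G x).det ∂μ = ∫ x in S, (fderiv ℝ H x).det ∂μ := by
  have : CompleteSpace E := FiniteDimensional.complete ℝ E
  let s : ℕ → ℝ := fun i => ((C + 1) * (i + 1))⁻¹
  have hs (i : ℕ) : ‖s i‖₊ * C < 1 := by
    have h : (C : ℝ) < (C + 1) * (i + 1) := by nlinarith [C.coe_nonneg, Nat.cast_nonneg (α := ℝ) i]
    rw [← NNReal.coe_lt_coe, NNReal.coe_mul, coe_nnnorm, Real.norm_of_nonneg (by positivity),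
      inv_mul_eq_div, NNReal.coe_one]
    exact (div_lt_one (by positivity)).2 h
  have s_inj : Function.Injective s := by
    intro i j hij
    simpa [(by positivity : (C : ℝ) + 1 ≠ 0)] using inv_injective hij
  have himage (i : ℕ) : (fun x => x + s i • G x) '' S = (fun x => x + s i • H x) '' S := by
    rw [← compl_inj_iff, ← image_compl_eq (bijective_id_add_smul_of_lipschitzWith lG (hs i)),
      ← image_compl_eq (bijective_id_add_smul_of_lipschitzWith lH (hs i))]
    exact image_congr fun x hx => by rw [hGH hx]
  let I := Finset.range (Module.finrank ℝ E + 1)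
  let w : ℕ → ℝ := fun i => ∏ j ∈ I.erase i, (s i - s j)
  have hsum {H : E → E} (hH : ContDiff ℝ 1 H) (lH : LipschitzWith C H) :
      ∫ x in S, (fderiv ℝ H x).det ∂μ = ∑ i ∈ I, μ.real ((fun x => x + s i • H x) '' S) / w i := by
    have hdet (x : E) : (fderiv ℝ H x).det = ∑ i ∈ I, (1 + s i • fderiv ℝ H x).det / w i :=
      det_eq_sum_det_one_add_smul_div s_inj.injOn (fderiv ℝ H x : E →ₗ[ℝ] E)
    rw [funext hdet, integral_finsetSum _ fun i _ =>
      (integrableOn_det_one_add_smul_fderiv μ hH hSb (s i)).div_const _]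
    refine Finset.sum_congr rfl fun i _ => ?_
    rw [integral_div,
      setIntegral_det_one_add_smul_fderiv μ (hH.differentiable one_ne_zero) lH hS (hs i)]
  simp only [hsum hG lG, hsum hH lH, himage]

theorem exists_contDiff_comp_near_id [FiniteDimensional ℝ E] [FiniteDimensional ℝ F] {K : Set E}
    (hK : IsCompact K) {f : E → F} (hf : ContinuousOn f K) (hinj : InjOn f K) {ε : ℝ}
    (hε : 0 < ε) : ∃ (g : F → E) (h : E → F),
      ContDiff ℝ 1 g ∧ ContDiff ℝ 1 h ∧ ∀ x ∈ K, dist (g (h x)) x < ε := by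
  have : CompactSpace K := isCompact_iff_compactSpace.1 hK
  obtain ⟨f', hf'⟩ := ContinuousMap.exists_restrict_eq hK.isClosed ⟨K.domRestrict f, hf.domRestrict⟩
  obtain ⟨r, hr⟩ := ContinuousMap.exists_extension'
    (hf.domRestrict.isClosedEmbedding (injOn_iff_injective.1 hinj)) ⟨Subtype.val, by fun_prop⟩
  obtain ⟨g, hg, hgr, -⟩ := r.continuous.exists_contDiff_approx 1 (ε := fun _ => ε / 2)
    continuous_const fun _ => half_pos hε
  obtain ⟨δ, hδ, hδg⟩ := Metric.mem_uniformity_dist.1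
    ((hK.image_of_continuousOn hf).uniformContinuousAt_of_continuousAt g
      (fun _ _ => hg.continuous.continuousAt) (Metric.dist_mem_uniformity (half_pos hε)))
  obtain ⟨h, hh, hhf, -⟩ := f'.continuous.exists_contDiff_approx 1 (ε := fun _ => δ)
    continuous_const fun _ => hδ
  refine ⟨g, h, hg, hh, fun x hx => ?_⟩
  have hf'x : f' x = f x := DFunLike.congr_fun hf' ⟨x, hx⟩
  have hrx : r (f x) = x := congr_fun hr ⟨x, hx⟩
  have hhx : dist (f x) (h x) < δ := by rw [dist_comm, ← hf'x]; exact hhf x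
  calc dist (g (h x)) x ≤ dist (g (f x)) (g (h x)) + dist (g (f x)) x := dist_triangle_left _ _ _
    _ < ε / 2 + ε / 2 := add_lt_add (hδg hhx (mem_image_of_mem f hx))
        (by simpa only [hrx] using hgr (f x))
    _ = ε := add_halves ε

theorem det_comp_eq_zero_of_finrank_lt [FiniteDimensional ℝ F]
    (h : Module.finrank ℝ F < Module.finrank ℝ E) (A : F →L[ℝ] E) (B : E →L[ℝ] F) :
    (A.comp B).det = 0 := by
  have := Module.finite_of_finrank_pos (pos_of_gt h)
  by_contra hdet
  have hinj : Function.Injective (A.comp B) := (LinearMap.equivOfDetNeZero _ hdet).injective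
  exact h.not_ge (LinearMap.finrank_le_finrank_of_injective
    (f := (B : E →ₗ[ℝ] F)) (Function.Injective.of_comp hinj))

theorem exists_contDiff_deriv_eq {b : ℝ → ℝ} (hb : Continuous b) :
    ∃ a : ℝ → ℝ, ContDiff ℝ 1 a ∧ ∀ t, HasDerivAt a (b t) t := by
  have ha (t : ℝ) : HasDerivAt (fun t => ∫ x in (0 : ℝ)..t, b x) (b t) t :=
    intervalIntegral.integral_hasDerivAt_right (hb.intervalIntegrable _ _)
      (hb.stronglyMeasurableAtFilter _ _) hb.continuousAt
  refine ⟨_, contDiff_one_iff_deriv.2 ⟨fun t => (ha t).differentiableAt, ?_⟩, ha⟩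
  rwa [show deriv _ = b from funext fun t => (ha t).deriv]

theorem det_fderiv_pi_comp_apply {ι : Type*} [Fintype ι] {a b : ℝ → ℝ}
    (ha : ∀ t, HasDerivAt a (b t) t) (y : ι → ℝ) :
    (fderiv ℝ (fun (y : ι → ℝ) i => a (y i)) y).det = ∏ i, b (y i) := by
  classical
  have h : HasFDerivAt (fun (y : ι → ℝ) i => a (y i)) (ContinuousLinearMap.pi fun i =>
      b (y i) • ContinuousLinearMap.proj (R := ℝ) (φ := fun _ : ι => ℝ) i) y :=
    hasFDerivAt_pi.2 fun i => (ha (y i)).comp_hasFDerivAt y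
      (ContinuousLinearMap.proj (R := ℝ) (φ := fun _ : ι => ℝ) i).hasFDerivAt
  rw [h.fderiv, ContinuousLinearMap.det, ← LinearMap.det_toMatrix', ← Matrix.det_diagonal]
  congr 1
  ext i j
  simp [LinearMap.toMatrix'_apply, Matrix.diagonal_apply, Pi.single_apply]

theorem exists_lipschitzWith_one_det_fderiv_supported (ι : Type*) [Fintype ι] {r : ℝ}
    (hr : 0 < r) : ∃ ψ : (ι → ℝ) → (ι → ℝ), ContDiff ℝ 1 ψ ∧ LipschitzWith 1 ψ ∧
      (∀ y, (fderiv ℝ ψ y).det ≠ 0 → ‖y‖ < r) ∧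
      0 < ∫ y, (fderiv ℝ ψ y).det := by
  let b : ContDiffBump (0 : ℝ) := ⟨r / 2, r, half_pos hr, half_lt_self hr⟩
  obtain ⟨a, ha, hab⟩ := exists_contDiff_deriv_eq b.continuous
  have lipschitz_a : LipschitzWith 1 a := by
    refine lipschitzWith_of_nnnorm_deriv_le (fun t => (hab t).differentiableAt) fun t => ?_
    rw [(hab t).deriv, ← NNReal.coe_le_coe, coe_nnnorm, Real.norm_of_nonneg b.nonneg]
    exact b.le_one
  have hsupp (y : ι → ℝ) (hy : ∏ i, b (y i) ≠ 0) : ‖y‖ < r := by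
    rw [Finset.prod_ne_zero_iff] at hy
    refine (pi_norm_lt_iff hr).2 fun i => ?_
    have : y i ∈ Function.support b := hy i (Finset.mem_univ i)
    rwa [b.support_eq, mem_ball_zero_iff] at this
  refine ⟨fun y i => a (y i), contDiff_pi.2 fun i => ha.comp (contDiff_apply ℝ ℝ i), ?_, ?_, ?_⟩
  · refine LipschitzWith.of_dist_le_mul fun x y => (dist_pi_le_iff (by positivity)).2 fun i => ?_
    exact (lipschitz_a.dist_le_mul _ _).trans (by gcongr; exact dist_le_pi_dist x y i)
  · simpa only [det_fderiv_pi_comp_apply hab] using hsupp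
  · simp only [det_fderiv_pi_comp_apply hab]
    have hcont : Continuous fun y : ι → ℝ => ∏ i, b (y i) :=
      continuous_finsetProd _ fun i _ => b.continuous.comp (continuous_apply i)
    refine hcont.integral_pos_of_hasCompactSupport_nonneg_nonzero (x := 0) ?_ ?_ ?_
    · exact HasCompactSupport.of_support_subset_isCompact (isCompact_closedBall 0 r)
        fun y hy => mem_closedBall_zero_iff.2 (hsupp y hy).le
    · exact fun y => Finset.prod_nonneg fun i _ => b.nonneg
    · exact Finset.prod_ne_zero_iff.2 fun i _ => (b.pos_of_mem_ball (by simpa [b] using hr)).ne'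

theorem exists_contDiff_eqOn_ball_eqOn_compl_ball [FiniteDimensional ℝ E] {Φ : E → E}
    (hΦ : ContDiff ℝ 1 Φ) {r R δ : ℝ} (hr : 0 < r) (hrR : r < R)
    (hΦδ : ∀ x ∈ Metric.closedBall 0 R, dist (Φ x) x < δ) :
    ∃ G : E → E, ContDiff ℝ 1 G ∧ (∃ C, LipschitzWith C G) ∧ (∀ x, dist (G x) x < δ) ∧
      EqOn G Φ (Metric.ball 0 r) ∧ EqOn G id (Metric.ball 0 R)ᶜ := by
  have : ProperSpace E := FiniteDimensional.proper ℝ E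
  let χ : ContDiffBump (0 : E) := ⟨r, R, hr, hrR⟩
  let Δ : E → E := fun x => χ x • (Φ x - x)
  have hχ : ∀ x ∉ Metric.ball (0 : E) R, χ x = 0 := fun x hx =>
    χ.zero_of_le_dist (by simpa [χ] using hx)
  have hΔ : ContDiff ℝ 1 Δ := χ.contDiff.smul (hΦ.sub contDiff_id)
  have compact_Δ : HasCompactSupport Δ := χ.hasCompactSupport.smul_right
  obtain ⟨C, hC⟩ : ∃ C, LipschitzWith C Δ :=
    hΔ.lipschitzWith_of_hasCompactSupport compact_Δ one_ne_zero
  refine ⟨fun x => x + Δ x, contDiff_id.add hΔ, ⟨1 + C, LipschitzWith.id.add hC⟩, fun x => ?_,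
    fun x hx => ?_, fun x hx => by simp [Δ, hχ x hx]⟩
  · rw [dist_self_add_left, norm_smul, Real.norm_of_nonneg χ.nonneg]
    by_cases hx : x ∈ Metric.ball (0 : E) R
    · rw [← dist_eq_norm]
      exact (mul_le_of_le_one_left dist_nonneg χ.le_one).trans_lt
        (hΦδ x (Metric.ball_subset_closedBall hx))
    · rw [hχ x hx, zero_mul]
      exact dist_nonneg.trans_lt (hΦδ 0 (Metric.mem_closedBall_self (hr.trans hrR).le))
  · simp [Δ, χ.one_of_mem_closedBall (Metric.ball_subset_closedBall hx)]

/- A smooth map close to the identity of the ball and of smaller rank could be interpolated with the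
identity and composed with a cutoff `ψ` so that the determinant vanishes everywhere, whereas its
integral is determined by the boundary values of `ψ`. -/
theorem card_le_finrank_of_continuousOn_injOn_closedBall {ι : Type*} [Fintype ι]
    [FiniteDimensional ℝ F] {f : (ι → ℝ) → F} (hf : ContinuousOn f (Metric.closedBall 0 1))
    (hinj : InjOn f (Metric.closedBall 0 1)) : Fintype.card ι ≤ Module.finrank ℝ F := by
  by_contra! hlt
  obtain ⟨g, h, hg, hh, hgh⟩ := exists_contDiff_comp_near_id (isCompact_closedBall 0 1) hf hinj
    (ε := 1 / 4) (by norm_num)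
  obtain ⟨G, hG, ⟨C, lG⟩, hGid, hGgh, hGcompl⟩ := exists_contDiff_eqOn_ball_eqOn_compl_ball
    (hg.comp hh) (r := 1 / 2) (by norm_num) (by norm_num) hgh
  obtain ⟨ψ, hψ, lψ, hsupp, hpos⟩ := exists_lipschitzWith_one_det_fderiv_supported ι
    (r := 1 / 4) (by norm_num)
  have det_comp (x : ι → ℝ) : (fderiv ℝ (ψ ∘ G) x).det = 0 := by
    rw [fderiv_comp x (hψ.differentiable one_ne_zero _) (hG.differentiable one_ne_zero _)]
    have hmul : ((fderiv ℝ ψ (G x)).comp (fderiv ℝ G x)).det =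
      (fderiv ℝ ψ (G x)).det * (fderiv ℝ G x).det := LinearMap.det_comp _ _
    rw [hmul, mul_eq_zero, or_iff_not_imp_left]
    intro hψG
    have hx : x ∈ Metric.ball (0 : ι → ℝ) (1 / 2) := by
      rw [mem_ball_zero_iff]
      have := norm_le_norm_add_norm_sub (G x) x
      have h2 := hGid x
      rw [dist_eq_norm] at h2
      linarith [hsupp _ hψG]
    rw [(hGgh.eventuallyEq_of_mem (Metric.isOpen_ball.mem_nhds hx)).fderiv_eq,
      fderiv_comp x (hg.differentiable one_ne_zero _) (hh.differentiable one_ne_zero _)]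
    exact det_comp_eq_zero_of_finrank_lt (by rwa [Module.finrank_fintype_fun_eq_card]) _ _
  have heq := setIntegral_det_fderiv_eq_of_eqOn_compl volume (hψ.comp hG) hψ
    ((lψ.comp lG).weaken (le_max_right 1 _)) (lψ.weaken (le_max_left _ _))
    measurableSet_ball Metric.isBounded_ball fun x hx => congr_arg ψ (hGcompl hx)
  simp only [det_comp, integral_zero] at heq
  rw [setIntegral_eq_integral_of_forall_compl_eq_zero fun x hx => ?_] at heq
  · exact hpos.ne heq
  · by_contra hψx
    exact hx (mem_ball_zero_iff.2 ((hsupp x hψx).trans (by norm_num)))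

theorem finrank_le_of_continuousOn_injOn [FiniteDimensional ℝ E] [FiniteDimensional ℝ F] {S : Set E}
    (hS : (interior S).Nonempty) {f : E → F} (hf : ContinuousOn f S) (hinj : InjOn f S) :
    Module.finrank ℝ E ≤ Module.finrank ℝ F := by
  obtain ⟨x, hx⟩ := hS
  let e : (Fin (Module.finrank ℝ E) → ℝ) ≃L[ℝ] E :=
    (Module.finBasis ℝ E).equivFun.symm.toContinuousLinearEquiv
  have hU : IsOpen ((fun y => x + e y) ⁻¹' interior S) := isOpen_interior.preimage (by fun_prop)
  obtain ⟨ε, hε, hball⟩ := Metric.nhds_basis_closedBall.mem_iff.1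
    (hU.mem_nhds (show (0 : Fin _ → ℝ) ∈ _ by simpa using hx))
  have hmaps : MapsTo (fun y => x + e (ε • y)) (Metric.closedBall 0 1) S := by
    intro y hy
    refine interior_subset (hball ?_)
    rw [mem_closedBall_zero_iff] at hy ⊢
    rw [norm_smul, Real.norm_of_nonneg hε.le]
    exact mul_le_of_le_one_right hε.le hy
  have hinj' : Function.Injective fun y => x + e (ε • y) :=
    (add_right_injective x).comp (e.injective.comp (smul_right_injective _ hε.ne'))
  simpa using card_le_finrank_of_continuousOn_injOn_closedBall
    (hf.comp (by fun_prop) hmaps) (hinj.comp hinj'.injOn hmaps)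

theorem le_of_isOpenEmbedding_of_range_inter {Z : Type*} [TopologicalSpace Z] {k m : ℕ}
    {f : (Fin k → ℝ) → Z} {g : (Fin m → ℝ) → Z} (hf : IsOpenEmbedding f) (hg : IsOpenEmbedding g)
    (h : (range f ∩ range g).Nonempty) : k ≤ m := by
  obtain ⟨_, ⟨x, rfl⟩, hx⟩ := h
  have hU : IsOpen (f ⁻¹' range g) := hg.isOpen_range.preimage hf.continuous
  choose! F hF using fun y (hy : y ∈ f ⁻¹' range g) => hy
  have hFcont : ContinuousOn F (f ⁻¹' range g) :=
    hg.isInducing.continuousOn_iff.2 (hf.continuous.continuousOn.congr hF)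
  have hFinj : InjOn F (f ⁻¹' range g) := fun a ha b hb hab =>
    hf.injective (by rw [← hF a ha, ← hF b hb, hab])
  simpa using finrank_le_of_continuousOn_injOn ⟨x, hU.interior_eq.symm ▸ hx⟩ hFcont hFinj

/-- The dimensions of the open cells contained in `Z`: a homeomorphism invariant of `Z`. -/
def cellDims (Z : Type*) [TopologicalSpace Z] : Set ℕ :=
  {k | ∃ f : (Fin k → ℝ) → Z, IsOpenEmbedding f}

theorem cellDims_eq_of_homeomorph {Z Z' : Type*} [TopologicalSpace Z] [TopologicalSpace Z']
    (e : Z ≃ₜ Z') : cellDims Z = cellDims Z' :=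
  Subset.antisymm (fun _ ⟨f, hf⟩ => ⟨e ∘ f, e.isOpenEmbedding.comp hf⟩)
    fun _ ⟨f, hf⟩ => ⟨e.symm ∘ f, e.symm.isOpenEmbedding.comp hf⟩

end InvarianceOfDimension

/-- A rooted forest with vertex type `W`: roots have no parent, and the depth function excludes
cycles and infinite ascending chains. -/
structure RootedForest (W : Type*) where
  parent : W → Option W
  depth : W → ℕ
  depth_lt {w u : W} : parent w = some u → depth u < depth w

namespace RootedForest

variable {W W' : Type*} (P : RootedForest W) {P' : RootedForest W'} {S : Set W}

/-- The vertices of a rooted forest without parent. -/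
def roots : Set W := {w | P.parent w = none}

/-- The vertices of a rooted forest with parent `w`. -/
def children (w : W) : Set W := {c | P.parent c = some w}

/-- The space of functions `f : W → [0, 1]` which vanish at each vertex whose parent has a value
different from `1`: how far a connected set containing the root has grown along each edge. -/
def growthSet : Set (W → ℝ) :=
  {f | (∀ w, f w ∈ Icc (0 : ℝ) 1) ∧ ∀ w u, P.parent w = some u → 0 < f w → f u = 1}

/-- A set of non-leaves closed under taking parents; these index the open cells of the growth
set. -/
def IsInnerSubtree (S : Set W) : Prop :=
  (∀ w ∈ S, ∀ u, P.parent w = some u → u ∈ S) ∧ ∀ w ∈ S, (P.children w).Nonempty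

/-- The vertices outside `S` which are roots or have their parent in `S`. -/
def outerBoundary (S : Set W) : Set W := {w | w ∉ S ∧ ∀ u, P.parent w = some u → u ∈ S}

/-- The numbers of outer boundary vertices of the inner subtrees. -/
def boundaryCards : Set ℕ := {k | ∃ S, P.IsInnerSubtree S ∧ (P.outerBoundary S).ncard = k}

variable {P}

theorem parent_induction {motive : W → Prop}
    (ih : ∀ w, (∀ u, P.parent w = some u → motive u) → motive w) (w : W) : motive w :=
  (measure P.depth).wf.induction w fun w h => ih w fun u hu => h u (P.depth_lt hu)

theorem children_induction [Finite W] {motive : W → Prop}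
    (ih : ∀ w, (∀ c ∈ P.children w, motive c) → motive w) (w : W) : motive w := by
  have : IsTrans W fun c w => P.depth w < P.depth c := ⟨fun _ _ _ h h' => h'.trans h⟩
  have : Std.Irrefl fun c w : W => P.depth w < P.depth c := ⟨fun _ => lt_irrefl _⟩
  exact (Finite.wellFounded_of_trans_of_irrefl fun c w => P.depth w < P.depth c).induction w
    fun w h => ih w fun c hc => h c (P.depth_lt hc)

theorem exists_parent_notMem {w : W} (hw : w ∉ S) (hw' : w ∉ P.outerBoundary S) :
    ∃ u, P.parent w = some u ∧ u ∉ S := by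
  by_contra! h
  exact hw' ⟨hw, h⟩

section Cells

variable (P) in
open Classical in
/-- The function equal to `1` on `S`, given by `x` on the outer boundary of `S`, and zero
elsewhere; it parametrizes the cell of the growth set belonging to `S`. -/
noncomputable def cellMap (S : Set W) (x : P.outerBoundary S → ℝ) : W → ℝ :=
  fun w => if h : w ∈ P.outerBoundary S then x ⟨w, h⟩ else if w ∈ S then 1 else 0

variable {x : P.outerBoundary S → ℝ} {f : W → ℝ} {w : W}

theorem cellMap_of_mem (h : w ∈ S) : P.cellMap S x w = 1 := by
  have : w ∉ P.outerBoundary S := fun h' => h'.1 h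
  simp [cellMap, this, h]

theorem cellMap_of_mem_outerBoundary (h : w ∈ P.outerBoundary S) :
    P.cellMap S x w = x ⟨w, h⟩ := by
  simp [cellMap, h]

theorem cellMap_of_notMem (h : w ∉ S) (h' : w ∉ P.outerBoundary S) : P.cellMap S x w = 0 := by
  simp [cellMap, h, h']

theorem eq_cellMap (h₁ : ∀ w ∈ S, f w = 1) (h₀ : ∀ w ∉ S, w ∉ P.outerBoundary S → f w = 0) :
    f = P.cellMap S fun w => f w := by
  funext w
  by_cases hw : w ∈ S
  · rw [cellMap_of_mem hw, h₁ w hw]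
  by_cases hw' : w ∈ P.outerBoundary S
  · rw [cellMap_of_mem_outerBoundary hw']
  · rw [cellMap_of_notMem hw hw', h₀ w hw hw']

theorem continuous_cellMap : Continuous (P.cellMap S) := by
  refine continuous_pi fun w => ?_
  by_cases hw : w ∈ S
  · simpa only [cellMap_of_mem hw] using continuous_const
  by_cases hw' : w ∈ P.outerBoundary S
  · simpa only [cellMap_of_mem_outerBoundary hw'] using continuous_apply _
  · simpa only [cellMap_of_notMem hw hw'] using continuous_const

theorem cellMap_mem_growthSet (hS : P.IsInnerSubtree S) (hx : ∀ w, x w ∈ Icc (0 : ℝ) 1) :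
    P.cellMap S x ∈ P.growthSet := by
  refine ⟨fun w => ?_, fun w u hwu hw => ?_⟩
  · by_cases h : w ∈ S
    · simp [cellMap_of_mem h]
    by_cases h' : w ∈ P.outerBoundary S
    · simpa only [cellMap_of_mem_outerBoundary h'] using hx ⟨w, h'⟩
    · simp [cellMap_of_notMem h h']
  · by_cases h : w ∈ S
    · exact cellMap_of_mem (hS.1 w h u hwu)
    by_cases h' : w ∈ P.outerBoundary S
    · exact cellMap_of_mem (h'.2 u hwu)
    · exact absurd (cellMap_of_notMem h h') hw.ne'

theorem eq_one_of_pos_outerBoundary [Finite W] (hS : P.IsInnerSubtree S) (hf : f ∈ P.growthSet)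
    (h : ∀ w ∈ P.outerBoundary S, 0 < f w) : ∀ w ∈ S, f w = 1 := by
  intro w
  induction w using P.children_induction with
  | ih w ih =>
    intro hw
    obtain ⟨c, hc⟩ := hS.2 w hw
    refine hf.2 c w hc ?_
    by_cases hcS : c ∈ S
    · rw [ih c hc hcS]
      exact zero_lt_one
    · exact h c ⟨hcS, fun u hu => Option.some_injective _ (hc.symm.trans hu) ▸ hw⟩

theorem eq_zero_of_parent_ne_one {u : W} (hf : f ∈ P.growthSet) (hu : P.parent w = some u)
    (h : f u ≠ 1) : f w = 0 :=
  by_contra fun hw => h (hf.2 w u hu ((hf.1 w).1.lt_of_ne' hw))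

theorem eq_zero_of_outerBoundary_ne_one (hf : f ∈ P.growthSet)
    (h : ∀ w ∈ P.outerBoundary S, f w ≠ 1) : ∀ w ∉ S, w ∉ P.outerBoundary S → f w = 0 := by
  intro w
  induction w using P.parent_induction with
  | ih w ih =>
    intro hw hw'
    obtain ⟨u, hu, huS⟩ := exists_parent_notMem hw hw'
    refine eq_zero_of_parent_ne_one hf hu ?_
    by_cases hub : u ∈ P.outerBoundary S
    · exact h u hub
    · rw [ih u hu huS hub]
      exact zero_ne_one

/-- The open cell of the growth set belonging to the inner subtree `S`. The sigmoid function
identifies `ℝ` with the open interval `(0, 1)`. -/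
noncomputable def openCell (hS : P.IsInnerSubtree S) (x : P.outerBoundary S → ℝ) : P.growthSet :=
  ⟨P.cellMap S fun w => Real.sigmoid (x w),
    cellMap_mem_growthSet hS fun _ => ⟨Real.sigmoid_nonneg _, Real.sigmoid_le_one _⟩⟩

theorem range_openCell [Finite W] (hS : P.IsInnerSubtree S) :
    range (openCell hS) = {f | ∀ w ∈ P.outerBoundary S, f.1 w ∈ Ioo (0 : ℝ) 1} := by
  ext f
  constructor
  · rintro ⟨x, rfl⟩ w hw
    simp only [openCell, cellMap_of_mem_outerBoundary hw]
    exact ⟨Real.sigmoid_pos _, Real.sigmoid_lt_one _⟩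
  · intro hf
    have h (w : P.outerBoundary S) : f.1 w ∈ range Real.sigmoid := by
      rw [Real.range_sigmoid]
      exact hf w w.2
    choose x hx using h
    refine ⟨x, Subtype.ext ?_⟩
    simp only [openCell, hx]
    exact (eq_cellMap (eq_one_of_pos_outerBoundary hS f.2 fun w hw => (hf w hw).1)
      (eq_zero_of_outerBoundary_ne_one f.2 fun w hw => (hf w hw).2.ne)).symm

theorem isOpenEmbedding_openCell [Finite W] (hS : P.IsInnerSubtree S) :
    IsOpenEmbedding (openCell hS) := by
  have hsig : IsEmbedding Real.sigmoid :=
    Real.sigmoid_strictMono.isEmbedding_of_ordConnected (by rw [Real.range_sigmoid]; infer_instance)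
  have hcont : Continuous (openCell hS) :=
    (continuous_cellMap.comp (continuous_pi fun w => hsig.continuous.comp (continuous_apply w))
      ).subtype_mk _
  let r : P.growthSet → P.outerBoundary S → ℝ := fun f w => f.1 w
  have hr : Continuous r := continuous_pi fun w => (continuous_apply _).comp continuous_subtype_val
  have hcomp : r ∘ openCell hS = Pi.map fun _ => Real.sigmoid := by
    funext x w
    exact cellMap_of_mem_outerBoundary (x := fun w => Real.sigmoid (x w)) w.2
  refine ⟨IsEmbedding.of_comp hcont hr (hcomp ▸ IsEmbedding.piMap fun _ => hsig), ?_⟩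
  rw [range_openCell hS]
  simp only [ofPred_forall]
  exact isOpen_iInter_of_finite fun w => isOpen_iInter_of_finite fun _ =>
    isOpen_Ioo.preimage ((continuous_apply w).comp continuous_subtype_val)

theorem exists_eq_cellMap (hf : f ∈ P.growthSet) :
    ∃ S, P.IsInnerSubtree S ∧ f = P.cellMap S fun w => f w := by
  refine ⟨{w | f w = 1 ∧ (P.children w).Nonempty}, ⟨fun w hw u hu => ⟨hf.2 w u hu ?_, w, hu⟩,
    fun w hw => hw.2⟩, eq_cellMap (fun w hw => hw.1) fun w hw hw' => ?_⟩
  · rw [hw.1]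
    exact zero_lt_one
  · obtain ⟨u, hu, huS⟩ := exists_parent_notMem hw hw'
    exact eq_zero_of_parent_ne_one hf hu fun h => huS ⟨h, w, hu⟩

theorem exists_range_openCell_inter_nonempty [Finite W] {O : Set P.growthSet} (hO : IsOpen O)
    (hne : O.Nonempty) :
    ∃ (S : Set W) (hS : P.IsInnerSubtree S), (range (openCell hS) ∩ O).Nonempty := by
  obtain ⟨f, hf⟩ := hne
  obtain ⟨O', hO', rfl⟩ := isOpen_induced_iff.1 hO
  obtain ⟨S, hS, hfS⟩ := exists_eq_cellMap f.2
  have hclosure : (fun w : P.outerBoundary S => f.1 w) ∈ closure (univ.pi fun _ => Ioo 0 1) := by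
    simpa only [closure_pi_set, closure_Ioo zero_ne_one, mem_univ_pi] using
      fun w : P.outerBoundary S => f.2.1 w
  obtain ⟨x, hxO, hx⟩ := mem_closure_iff.1 hclosure _ (hO'.preimage continuous_cellMap)
    (show P.cellMap S _ ∈ O' from hfS ▸ hf)
  rw [mem_univ_pi] at hx
  refine ⟨S, hS, ⟨_, cellMap_mem_growthSet hS fun w => Ioo_subset_Icc_self (hx w)⟩, ?_, hxO⟩
  rw [range_openCell hS]
  intro w hw
  simpa only [cellMap_of_mem_outerBoundary hw] using hx ⟨w, hw⟩

theorem cellDims_growthSet [Finite W] : cellDims P.growthSet = P.boundaryCards := by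
  have hcell (S) (hS : P.IsInnerSubtree S) : ∃ g : (Fin (P.outerBoundary S).ncard → ℝ) →
      P.growthSet, IsOpenEmbedding g ∧ range g = range (openCell hS) := by
    let e := (Finite.equivFinOfCardEq (Nat.card_coe_set_eq (P.outerBoundary S))).symm
    let E := Homeomorph.piCongrLeft (Y := fun _ => ℝ) e
    exact ⟨openCell hS ∘ E, (isOpenEmbedding_openCell hS).comp E.isOpenEmbedding,
      E.surjective.range_comp _⟩
  ext k
  constructor
  · rintro ⟨f, hf⟩
    obtain ⟨S, hS, hne⟩ :=
      exists_range_openCell_inter_nonempty hf.isOpen_range (range_nonempty f)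
    obtain ⟨g, hg, hgr⟩ := hcell S hS
    rw [← hgr] at hne
    exact ⟨S, hS, le_antisymm (le_of_isOpenEmbedding_of_range_inter hg hf hne)
      (le_of_isOpenEmbedding_of_range_inter hf hg (inter_comm _ _ ▸ hne))⟩
  · rintro ⟨S, hS, rfl⟩
    obtain ⟨g, hg, -⟩ := hcell S hS
    exact ⟨g, hg⟩

end Cells

section BoundaryCards

theorem isInnerSubtree_empty : P.IsInnerSubtree ∅ := by
  simp [IsInnerSubtree]

@[simp]
theorem outerBoundary_empty : P.outerBoundary ∅ = P.roots := by
  ext w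
  simp [outerBoundary, roots, Option.eq_none_iff_forall_ne_some]

theorem ncard_roots_mem_boundaryCards : P.roots.ncard ∈ P.boundaryCards :=
  ⟨∅, isInnerSubtree_empty, by rw [outerBoundary_empty]⟩

theorem IsInnerSubtree.insert_of_mem_outerBoundary (hS : P.IsInnerSubtree S) {w : W}
    (hw : w ∈ P.outerBoundary S) (hc : (P.children w).Nonempty) :
    P.IsInnerSubtree (insert w S) := by
  constructor
  · rintro x (rfl | hx) u hu
    · exact mem_insert_of_mem _ (hw.2 u hu)
    · exact mem_insert_of_mem _ (hS.1 x hx u hu)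
  · rintro x (rfl | hx)
    · exact hc
    · exact hS.2 x hx

theorem IsInnerSubtree.outerBoundary_insert (hS : P.IsInnerSubtree S) {w : W}
    (hw : w ∈ P.outerBoundary S) :
    P.outerBoundary (insert w S) = (P.outerBoundary S \ {w}) ∪ P.children w := by
  ext x
  constructor
  · rintro ⟨hx, hu⟩
    rw [mem_insert_iff, not_or] at hx
    by_cases hxw : P.parent x = some w
    · exact .inr hxw
    · exact .inl ⟨⟨hx.2, fun u hxu => (hu u hxu).resolve_left fun h => hxw (h ▸ hxu)⟩, hx.1⟩
  · rintro (⟨⟨hx, hu⟩, hxw⟩ | hx)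
    · exact ⟨not_or.2 ⟨hxw, hx⟩, fun u h => mem_insert_of_mem _ (hu u h)⟩
    · refine ⟨?_, fun u hu => .inl (Option.some_injective _ (hu.symm.trans hx))⟩
      rintro (rfl | h)
      · exact (P.depth_lt hx).ne rfl
      · exact hw.1 (hS.1 x h w hx)

theorem IsInnerSubtree.ncard_outerBoundary_insert [Finite W] (hS : P.IsInnerSubtree S) {w : W}
    (hw : w ∈ P.outerBoundary S) : (P.outerBoundary (insert w S)).ncard + 1 =
      (P.outerBoundary S).ncard + (P.children w).ncard := by
  have hd : Disjoint (P.outerBoundary S \ {w}) (P.children w) :=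
    Set.disjoint_left.2 fun x hx hxw => hw.1 (hx.1.2 w hxw)
  rw [hS.outerBoundary_insert hw, ncard_union_eq hd (toFinite _) (toFinite _), add_right_comm,
    ncard_sdiff_singleton_add_one hw (toFinite _)]

theorem exists_mem_outerBoundary_children_nonempty {w : W} (hw : w ∉ S)
    (hc : (P.children w).Nonempty) : ∃ u ∈ P.outerBoundary S, (P.children u).Nonempty := by
  induction w using P.parent_induction with
  | ih w ih =>
    by_cases hw' : w ∈ P.outerBoundary S
    · exact ⟨w, hw', hc⟩
    · obtain ⟨u, hu, huS⟩ := exists_parent_notMem hw hw'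
      exact ih u hu huS ⟨w, hu⟩

/-- A forest is reduced if no vertex has exactly one child. -/
def IsReduced (P : RootedForest W) : Prop := ∀ w, (P.children w).ncard ≠ 1

theorem IsReduced.ncard_outerBoundary_lt_insert [Finite W] (hP : P.IsReduced)
    (hS : P.IsInnerSubtree S) {w : W} (hw : w ∈ P.outerBoundary S)
    (hc : (P.children w).Nonempty) :
    (P.outerBoundary S).ncard < (P.outerBoundary (insert w S)).ncard := by
  have h1 := hS.ncard_outerBoundary_insert hw
  have h2 : 0 < (P.children w).ncard := (ncard_pos (toFinite _)).2 hc
  have h3 := hP w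
  omega

end BoundaryCards

section NodForest

/-- A forest is centered at the root `w₀` if each vertex is a root or a child of `w₀`. -/
structure IsCenteredAt (P : RootedForest W) (w₀ : W) : Prop where
  center_mem : w₀ ∈ P.roots
  mem_or_mem : ∀ w, w ∈ P.roots ∨ w ∈ P.children w₀

/-- A forest without edges, or one whose edges emanate from a single root with at least two
children. These are the forests describing the hyperspaces `C(p, X)` of simple `n`-ods `X`. -/
def IsNodForest (P : RootedForest W) : Prop :=
  P.roots = univ ∨ ∃ w₀, P.IsCenteredAt w₀ ∧ 2 ≤ (P.children w₀).ncard

/-- Rooted forests are isomorphic if a bijection of their vertices preserves parents. -/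
def Isomorphic (P : RootedForest W) (P' : RootedForest W') : Prop :=
  ∃ σ : W ≃ W', ∀ w, P'.parent (σ w) = (P.parent w).map σ

theorem IsCenteredAt.eq_center {w₀ w : W} (hP : P.IsCenteredAt w₀)
    (hc : (P.children w).Nonempty) : w = w₀ := by
  obtain ⟨c, hc⟩ := hc
  rcases hP.mem_or_mem c with h | h
  · exact absurd (h.symm.trans hc) (Option.some_ne_none _).symm
  · exact Option.some_injective _ (hc.symm.trans h)

theorem boundaryCards_of_roots_eq_univ (h : P.roots = univ) :
    P.boundaryCards = {Nat.card W} := by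
  ext k
  constructor
  · rintro ⟨S, hS, rfl⟩
    have : S = ∅ := by
      refine eq_empty_of_forall_notMem fun w hw => ?_
      obtain ⟨c, hc⟩ := hS.2 w hw
      exact Option.some_ne_none w (hc.symm.trans (h.symm ▸ mem_univ c : c ∈ P.roots))
    rw [this, outerBoundary_empty, h, ncard_univ, mem_singleton_iff]
  · rintro rfl
    rw [← ncard_univ, ← h]
    exact ncard_roots_mem_boundaryCards

theorem IsCenteredAt.boundaryCards_eq [Finite W] {w₀ : W} (hP : P.IsCenteredAt w₀)
    (hc : (P.children w₀).Nonempty) : P.boundaryCards =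
      {P.roots.ncard, P.roots.ncard + (P.children w₀).ncard - 1} := by
  have hmem : w₀ ∈ P.outerBoundary ∅ := by simpa using hP.center_mem
  have hcard := isInnerSubtree_empty.ncard_outerBoundary_insert hmem
  rw [outerBoundary_empty, insert_empty_eq] at hcard
  ext k
  constructor
  · rintro ⟨S, hS, rfl⟩
    have hsub : S ⊆ {w₀} := fun w hw => hP.eq_center (hS.2 w hw)
    rcases subset_singleton_iff_eq.1 hsub with rfl | rfl
    · exact .inl (by rw [outerBoundary_empty])
    · exact .inr (by rw [mem_singleton_iff, ← hcard, Nat.add_sub_cancel])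
  · rintro (rfl | rfl)
    · exact ncard_roots_mem_boundaryCards
    · refine ⟨_, isInnerSubtree_empty.insert_of_mem_outerBoundary hmem hc, ?_⟩
      rw [insert_empty_eq, ← hcard, Nat.add_sub_cancel]

theorem IsReduced.isNodForest_of_boundaryCards_subset [Finite W] (hP : P.IsReduced) {a b : ℕ}
    (hab : P.boundaryCards ⊆ {a, b}) : P.IsNodForest := by
  by_cases h : ∃ w, (P.children w).Nonempty
  · obtain ⟨w, hw⟩ := h
    obtain ⟨w₀, h₀, hc₀⟩ := exists_mem_outerBoundary_children_nonempty (notMem_empty w) hw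
    have hS₀ := isInnerSubtree_empty.insert_of_mem_outerBoundary h₀ hc₀
    have hlt := hP.ncard_outerBoundary_lt_insert isInnerSubtree_empty h₀ hc₀
    have center (u : W) (hu : (P.children u).Nonempty) : u = w₀ := by
      by_contra hne
      obtain ⟨v, hv, hcv⟩ := exists_mem_outerBoundary_children_nonempty
        (S := insert w₀ ∅) (by simpa using hne) hu
      have hlt' := hP.ncard_outerBoundary_lt_insert hS₀ hv hcv
      have h0 := hab ⟨∅, isInnerSubtree_empty, rfl⟩
      have h1 := hab ⟨_, hS₀, rfl⟩
      have h2 := hab ⟨_, hS₀.insert_of_mem_outerBoundary hv hcv, rfl⟩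
      simp only [mem_insert_iff, mem_singleton_iff] at h0 h1 h2
      omega
    refine .inr ⟨w₀, ⟨by simpa using h₀, fun u => ?_⟩, ?_⟩
    · rcases hu : P.parent u with _ | v
      · exact .inl hu
      · exact .inr (hu.trans (congr_arg some (center v ⟨u, hu⟩)))
    · exact (Nat.two_le_iff _).2 ⟨((ncard_pos (toFinite _)).2 hc₀).ne', hP w₀⟩
  · refine .inl (eq_univ_of_forall fun w => Option.eq_none_iff_forall_ne_some.2 fun u hu => ?_)
    exact h ⟨u, w, hu⟩

theorem exists_equiv_of_ncard_fiber_eq {α : Type*} [Finite W] [Finite W'] {f : W → α}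
    {g : W' → α} (h : ∀ a, {w | f w = a}.ncard = {w | g w = a}.ncard) :
    ∃ σ : W ≃ W', ∀ w, g (σ w) = f w := by
  have hfiber (a : α) : Nonempty ({w // f w = a} ≃ {w // g w = a}) := Finite.card_eq.1 (h a)
  exact ⟨Equiv.ofFiberEquiv fun a => (hfiber a).some, Equiv.ofFiberEquiv_map _⟩

theorem IsCenteredAt.exists_label {w₀ : W} (hP : P.IsCenteredAt w₀) :
    ∃ f : W → Option Bool, {w | f w = none} = {w₀} ∧ {w | f w = some false} = P.roots \ {w₀} ∧
      {w | f w = some true} = P.children w₀ := by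
  classical
  have h₀ : P.parent w₀ = none := hP.center_mem
  refine ⟨fun w => if w = w₀ then none else some (P.parent w).isSome, ?_, ?_, ?_⟩ <;> ext w <;>
    by_cases hw : w = w₀ <;> rcases hP.mem_or_mem w with h | h <;>
    simp_all [roots, children]

theorem IsCenteredAt.isomorphic [Finite W] [Finite W'] {w₀ : W} {w₀' : W'}
    (hP : P.IsCenteredAt w₀) (hP' : P'.IsCenteredAt w₀')
    (hroots : P.roots.ncard = P'.roots.ncard)
    (hchildren : (P.children w₀).ncard = (P'.children w₀').ncard) : P.Isomorphic P' := by
  obtain ⟨f, hf, hfroot, hfchild⟩ := hP.exists_label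
  obtain ⟨g, hg, hgroot, hgchild⟩ := hP'.exists_label
  obtain ⟨σ, hσ⟩ : ∃ σ : W ≃ W', ∀ w, g (σ w) = f w := by
    refine exists_equiv_of_ncard_fiber_eq fun a => ?_
    rcases a with _ | _ | _
    · rw [hf, hg, ncard_singleton, ncard_singleton]
    · rw [hfroot, hgroot, ncard_sdiff_singleton_of_mem hP.center_mem,
        ncard_sdiff_singleton_of_mem hP'.center_mem, hroots]
    · rw [hfchild, hgchild, hchildren]
  have hσ₀ : σ w₀ = w₀' := hg.subset ((hσ w₀).trans (hf.superset (mem_singleton w₀)))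
  refine ⟨σ, fun w => ?_⟩
  by_cases hw : w = w₀
  · rw [hw, hσ₀, hP.center_mem, hP'.center_mem, Option.map_none]
  rcases hP.mem_or_mem w with h | h
  · rw [h, Option.map_none]
    exact (hgroot.subset ((hσ w).trans (hfroot.superset ⟨h, hw⟩))).1
  · rw [h, Option.map_some, hσ₀]
    exact hgchild.subset ((hσ w).trans (hfchild.superset h))

theorem IsNodForest.isomorphic [Finite W] [Finite W'] (hP : P.IsNodForest)
    (hP' : P'.IsNodForest) (hcards : P.boundaryCards = P'.boundaryCards) : P.Isomorphic P' := by
  rcases hP with hX | ⟨w₀, hX, hc⟩ <;> rcases hP' with hY | ⟨w₀', hY, hc'⟩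
  · rw [boundaryCards_of_roots_eq_univ hX, boundaryCards_of_roots_eq_univ hY,
      singleton_eq_singleton_iff] at hcards
    obtain ⟨σ⟩ : Nonempty (W ≃ W') := Finite.card_eq.1 hcards
    refine ⟨σ, fun w => ?_⟩
    rw [hX.superset (mem_univ w), hY.superset (mem_univ (σ w)), Option.map_none]
  · rw [boundaryCards_of_roots_eq_univ hX,
      hY.boundaryCards_eq (nonempty_of_ncard_ne_zero (by omega))] at hcards
    have h1 := hcards.superset (mem_insert _ _)
    have h2 := hcards.superset (mem_insert_of_mem _ (mem_singleton _))
    rw [mem_singleton_iff] at h1 h2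
    omega
  · rw [boundaryCards_of_roots_eq_univ hY,
      hX.boundaryCards_eq (nonempty_of_ncard_ne_zero (by omega))] at hcards
    have h1 := hcards.subset (mem_insert _ _)
    have h2 := hcards.subset (mem_insert_of_mem _ (mem_singleton _))
    rw [mem_singleton_iff] at h1 h2
    omega
  · rw [hX.boundaryCards_eq (nonempty_of_ncard_ne_zero (by omega)),
      hY.boundaryCards_eq (nonempty_of_ncard_ne_zero (by omega)), pair_eq_pair_iff] at hcards
    exact hX.isomorphic hY (by omega) (by omega)

theorem IsNodForest.isomorphic_of_isReduced [Finite W] [Finite W'] (hP : P.IsNodForest)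
    (hP' : P'.IsReduced) (hcards : P.boundaryCards = P'.boundaryCards) : P.Isomorphic P' := by
  obtain ⟨a, b, hab⟩ : ∃ a b, P.boundaryCards ⊆ {a, b} := by
    rcases hP with hX | ⟨w₀, hX, hc⟩
    · exact ⟨0, Nat.card W, by rw [boundaryCards_of_roots_eq_univ hX]; exact subset_insert _ _⟩
    · exact ⟨_, _, (hX.boundaryCards_eq (nonempty_of_ncard_ne_zero (by omega))).le⟩
  exact hP.isomorphic (hP'.isNodForest_of_boundaryCards_subset (hcards ▸ hab)) hcards

end NodForest

end RootedForest

namespace RootedForest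

variable {W : Type*} (P : RootedForest W) {w u x : W}

/-- The vertex `w` is a proper ancestor of `x`. -/
def IsAncestor (w x : W) : Prop := Relation.TransGen (fun u x => P.parent x = some u) w x

variable {P}

theorem isAncestor_iff_of_parent_eq_some (hu : P.parent x = some u) :
    P.IsAncestor w x ↔ u = w ∨ P.IsAncestor w u := by
  simp only [IsAncestor, Relation.TransGen.tail'_iff (a := w) (c := x), hu, Option.some_inj,
    exists_eq_right', Relation.reflTransGen_iff_eq_or_transGen]

theorem not_isAncestor_of_mem_roots (hx : x ∈ P.roots) : ¬ P.IsAncestor w x := by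
  intro h
  obtain ⟨u, -, hu⟩ := Relation.TransGen.tail'_iff.1 h
  exact Option.some_ne_none u (hu.symm.trans hx)

theorem IsAncestor.depth_lt (h : P.IsAncestor w x) : P.depth w < P.depth x := by
  induction h with
  | single h => exact P.depth_lt h
  | tail _ h ih => exact ih.trans (P.depth_lt h)

theorem isCompact_growthSet : IsCompact P.growthSet := by
  have h : P.growthSet = univ.pi (fun _ => Icc (0 : ℝ) 1) ∩
      ⋂ w, ⋂ u, ⋂ _ : P.parent w = some u, ({f | f w ≤ 0} ∪ {f | f u = 1}) := by
    ext f
    simp only [growthSet, mem_ofPred_eq, mem_inter_iff, mem_univ_pi, mem_iInter, mem_union,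
      ← not_lt, imp_iff_not_or]
  rw [h]
  refine (isCompact_univ_pi fun _ => isCompact_Icc).inter_right
    (isClosed_iInter fun w => isClosed_iInter fun u => isClosed_iInter fun _ => ?_)
  exact (isClosed_le (continuous_apply w) continuous_const).union
    (isClosed_eq (continuous_apply u) continuous_const)

end RootedForest

/-- A presentation of a subset `Z` of `Y` as a tree with root `q`: the vertices other than `q` form
a rooted forest, and `path w` runs on `[0, 1]` from the parent of the vertex `w`, or from `q` if
there is none, to `w`. -/
structure RootedArcs (Y : Type*) [TopologicalSpace Y] (q : Y) (Z : Set Y) (W : Type*) extends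
    RootedForest W where
  path : W → ℝ → Y
  continuous_path (w : W) : Continuous (path w)
  path_zero (w : W) : path w 0 = (parent w).elim q fun u => path u 1
  injOn_path (w : W) : InjOn (path w) (Ioc 0 1)
  disjoint_path {w w' : W} : w ≠ w' → Disjoint (path w '' Ioc 0 1) (path w' '' Ioc 0 1)
  root_notMem (w : W) : q ∉ path w '' Ioc 0 1
  carrier_eq : insert q (⋃ w, path w '' Ioc 0 1) = Z

namespace RootedArcs

section Basic

variable {Y : Type*} [TopologicalSpace Y] {q : Y} {Z : Set Y} {W : Type*} (D : RootedArcs Y q Z W)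
  {w w' : W} {s t : ℝ}

theorem path_inj (hs : s ∈ Ioc (0 : ℝ) 1) (ht : t ∈ Ioc (0 : ℝ) 1)
    (h : D.path w s = D.path w' t) : w = w' ∧ s = t := by
  obtain rfl : w = w' := by
    by_contra hne
    exact (D.disjoint_path hne).ne_of_mem (mem_image_of_mem _ hs) (mem_image_of_mem _ ht) h
  exact ⟨rfl, D.injOn_path w hs ht h⟩

theorem path_ne (hs : s ∈ Ioc (0 : ℝ) 1) : D.path w s ≠ q :=
  fun h => D.root_notMem w ⟨s, hs, h⟩

end Basic

section Lift

variable {Y : Type*} [TopologicalSpace Y] {q : Y} {W : Type*} (D : RootedArcs Y q univ W)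

theorem eq_root_or_exists (y : Y) : y = q ∨ ∃ w, ∃ t ∈ Ioc (0 : ℝ) 1, D.path w t = y := by
  simpa only [mem_insert_iff, mem_iUnion, mem_image] using D.carrier_eq.superset (mem_univ y)

theorem continuous_of_continuousOn_comp_path [T2Space Y] [Finite W] {Z : Type*}
    [TopologicalSpace Z] {G : Y → Z} (hG : ∀ w, ContinuousOn (G ∘ D.path w) (Icc 0 1)) :
    Continuous G := by
  let π : Unit ⊕ (Σ _ : W, Icc (0 : ℝ) 1) → Y :=
    Sum.elim (fun _ => q) fun p => D.path p.1 p.2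
  have hπ : Continuous π := continuous_const.sumElim
    (continuous_sigma fun w => (D.continuous_path w).comp continuous_subtype_val)
  have hsurj : Function.Surjective π := by
    intro y
    rcases D.eq_root_or_exists y with rfl | ⟨w, t, ht, rfl⟩
    · exact ⟨.inl (), rfl⟩
    · exact ⟨.inr ⟨w, t, Ioc_subset_Icc_self ht⟩, rfl⟩
  refine (hπ.isClosedMap.isQuotientMap hπ hsurj).continuous_iff.2 (continuous_sum_dom.2
    ⟨continuous_of_const fun _ _ => rfl, continuous_sigma fun w => (hG w).domRestrict⟩)

theorem exists_lift [T2Space Y] [Finite W] {Z : Type*} [TopologicalSpace Z] (z₀ : Z)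
    (F : W → ℝ → Z) (hF : ∀ w, ContinuousOn (F w) (Icc 0 1))
    (h₀ : ∀ w, F w 0 = (D.parent w).elim z₀ fun u => F u 1) :
    ∃ G : Y → Z, Continuous G ∧ G q = z₀ ∧ ∀ w, ∀ t ∈ Icc (0 : ℝ) 1, G (D.path w t) = F w t := by
  have hex (y : Y) : ∃ z, (y = q ∧ z = z₀) ∨
      ∃ w, ∃ t ∈ Ioc (0 : ℝ) 1, D.path w t = y ∧ z = F w t := by
    rcases D.eq_root_or_exists y with h | ⟨w, t, ht, h⟩
    · exact ⟨z₀, .inl ⟨h, rfl⟩⟩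
    · exact ⟨F w t, .inr ⟨w, t, ht, h, rfl⟩⟩
  choose G hG using hex
  have hq : G q = z₀ := by
    rcases hG q with ⟨-, h⟩ | ⟨w, t, ht, h, -⟩
    · exact h
    · exact absurd h (D.path_ne ht)
  have hpos (w : W) (t : ℝ) (ht : t ∈ Ioc 0 1) : G (D.path w t) = F w t := by
    rcases hG (D.path w t) with ⟨h, -⟩ | ⟨w', t', ht', h, h'⟩
    · exact absurd h (D.path_ne ht)
    · obtain ⟨rfl, rfl⟩ := D.path_inj ht' ht h
      exact h'
  have hall (w : W) (t : ℝ) (ht : t ∈ Icc 0 1) : G (D.path w t) = F w t := by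
    rcases ht.1.eq_or_lt with rfl | h
    · rw [D.path_zero, h₀]
      rcases D.parent w with _ | u
      · exact hq
      · exact hpos u 1 ⟨one_pos, le_rfl⟩
    · exact hpos w t ⟨h, ht.2⟩
  exact ⟨G, D.continuous_of_continuousOn_comp_path fun w => (hF w).congr (hall w), hq, hall⟩

theorem exists_homeomorph {Y' : Type*} [TopologicalSpace Y'] {q' : Y'} {W' : Type*} [T2Space Y]
    [T2Space Y'] [Finite W] [Finite W'] (D' : RootedArcs Y' q' univ W')
    (hD : D.Isomorphic D'.toRootedForest) : ∃ h : Y ≃ₜ Y', h q = q' := by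
  obtain ⟨σ, hσ⟩ := hD
  have hσ' (w : W') : D.parent (σ.symm w) = (D'.parent w).map σ.symm := by
    rw [← congr_arg D'.parent (σ.apply_symm_apply w), hσ, Option.map_map, σ.symm_comp_self,
      Option.map_id, id]
  obtain ⟨G, hG, hq, hp⟩ := D.exists_lift q' (fun w => D'.path (σ w))
    (fun w => (D'.continuous_path _).continuousOn)
    (fun w => by rw [D'.path_zero, hσ]; cases D.parent w <;> rfl)
  obtain ⟨G', hG', hq', hp'⟩ := D'.exists_lift q (fun w => D.path (σ.symm w))
    (fun w => (D.continuous_path _).continuousOn)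
    (fun w => by rw [D.path_zero, hσ']; cases D'.parent w <;> rfl)
  refine ⟨⟨⟨G, G', fun y => ?_, fun y => ?_⟩, hG, hG'⟩, hq⟩
  · rcases D.eq_root_or_exists y with rfl | ⟨w, t, ht, rfl⟩
    · rw [hq, hq']
    · rw [hp w t (Ioc_subset_Icc_self ht), hp' _ t (Ioc_subset_Icc_self ht), σ.symm_apply_apply]
  · rcases D'.eq_root_or_exists y with rfl | ⟨w, t, ht, rfl⟩
    · rw [hq', hq]
    · rw [hp' w t (Ioc_subset_Icc_self ht), hp _ t (Ioc_subset_Icc_self ht), σ.apply_symm_apply]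

end Lift

section Height

variable {Y : Type*} [TopologicalSpace Y] {q : Y} {W : Type*} {D : RootedArcs Y q univ W}

/-- A height function of the vertex `w`: the parameter on the arc of `w`, constantly `1` beyond `w`,
and `0` elsewhere. -/
structure IsHeight (D : RootedArcs Y q univ W) (w : W) (ρ : Y → ℝ) : Prop where
  continuous : Continuous ρ
  root : ρ q = 0
  path_self {t : ℝ} : t ∈ Icc (0 : ℝ) 1 → ρ (D.path w t) = t
  path_child {c : W} {t : ℝ} : c ∈ D.children w → t ∈ Icc (0 : ℝ) 1 → ρ (D.path c t) = 1
  eq_zero_or_one {y : Y} : y ∉ D.path w '' Ioc 0 1 → ρ y = 0 ∨ ρ y = 1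

theorem exists_isHeight [T2Space Y] [Finite W] (D : RootedArcs Y q univ W) (w : W) :
    ∃ ρ, D.IsHeight w ρ := by
  classical
  have hstart (x : W) : (if x = w then 0 else if D.IsAncestor w x then 1 else 0 : ℝ) =
      (D.parent x).elim 0 fun u => if u = w then 1 else if D.IsAncestor w u then 1 else 0 := by
    rcases hu : D.parent x with _ | u
    · simp [RootedForest.not_isAncestor_of_mem_roots (show x ∈ D.roots from hu)]
    by_cases hx : x = w
    · subst hx
      have hux : u ≠ x := fun h => (D.depth_lt hu).ne (congr_arg D.depth h)
      have hxu : ¬ D.IsAncestor x u := fun h => (D.depth_lt hu).asymm h.depth_lt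
      simp [hux, hxu]
    · simp only [hx, if_false, Option.elim_some, RootedForest.isAncestor_iff_of_parent_eq_some hu]
      split_ifs <;> simp_all
  obtain ⟨ρ, hρ, hq, hp⟩ := D.exists_lift (0 : ℝ)
    (fun x t => if x = w then t else if D.IsAncestor w x then 1 else 0)
    (fun x => by split_ifs <;> fun_prop) hstart
  refine ⟨ρ, hρ, hq, fun ht => by rw [hp w _ ht, if_pos rfl], fun {c t} hc ht => ?_,
    fun {y} hy => ?_⟩
  · have hcw : c ≠ w := fun h => (D.depth_lt hc).ne (congr_arg D.depth h.symm)
    rw [hp c t ht, if_neg hcw, if_pos (.single hc)]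
  · rcases D.eq_root_or_exists y with rfl | ⟨x, t, ht, rfl⟩
    · exact .inl hq
    · have hx : x ≠ w := by
        rintro rfl
        exact hy ⟨t, ht, rfl⟩
      rw [hp x t (Ioc_subset_Icc_self ht), if_neg hx]
      split_ifs
      exacts [.inr rfl, .inl rfl]

variable {w : W} {ρ : Y → ℝ}

theorem IsHeight.le_one (hρ : D.IsHeight w ρ) (y : Y) : ρ y ≤ 1 := by
  by_cases hy : y ∈ D.path w '' Ioc 0 1
  · obtain ⟨t, ht, rfl⟩ := hy
    rw [hρ.path_self (Ioc_subset_Icc_self ht)]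
    exact ht.2
  · rcases hρ.eq_zero_or_one hy with h | h
    · exact h.trans_le zero_le_one
    · exact h.le

theorem IsHeight.path_mem (hρ : D.IsHeight w ρ) {B : Set Y} (hB : IsClosed B)
    (hBc : IsPreconnected B) (hq : q ∈ B) {y : Y} (hy : y ∈ B) {t : ℝ} (ht : t ∈ Ioc 0 (ρ y)) :
    D.path w t ∈ B := by
  have himage := (hBc.image ρ hρ.continuous.continuousOn).Icc_subset
    (mem_image_of_mem _ hq) (mem_image_of_mem _ hy)
  rw [hρ.root] at himage
  have hsub : Ioo 0 (ρ y) ⊆ D.path w ⁻¹' B := by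
    intro s hs
    obtain ⟨z, hz, rfl⟩ := himage (Ioo_subset_Icc_self hs)
    have hz' : z ∈ D.path w '' Ioc 0 1 := by
      by_contra h
      rcases hρ.eq_zero_or_one h with h | h
      · exact hs.1.ne' h
      · exact (hs.2.trans_le (hρ.le_one y)).ne h
    obtain ⟨r, hr, rfl⟩ := hz'
    rwa [mem_preimage, hρ.path_self (Ioc_subset_Icc_self hr)]
  have hcl := closure_minimal hsub (hB.preimage (D.continuous_path w))
  rw [closure_Ioo (ht.1.trans_le ht.2).ne] at hcl
  exact hcl (Ioc_subset_Icc_self ht)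

end Height

section Grow

variable {Y : Type*} {q : Y} {W : Type*}

/-- The subtree made of the initial pieces of length `f w` of the arcs. -/
def grow [TopologicalSpace Y] (D : RootedArcs Y q univ W) (f : W → ℝ) : Set Y :=
  insert q (⋃ w, D.path w '' Ioc 0 (f w))

section Topological

variable [TopologicalSpace Y] (D : RootedArcs Y q univ W) {f g : W → ℝ} {w : W} {t : ℝ}

theorem path_mem_grow (ht : t ∈ Ioc 0 (f w)) : D.path w t ∈ D.grow f :=
  .inr (mem_iUnion.2 ⟨w, t, ht, rfl⟩)

theorem path_mem_grow_iff (hf : f ∈ D.growthSet) (ht : t ∈ Ioc (0 : ℝ) 1) :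
    D.path w t ∈ D.grow f ↔ t ≤ f w := by
  refine ⟨?_, fun h => D.path_mem_grow ⟨ht.1, h⟩⟩
  rintro (h | h)
  · exact absurd h (D.path_ne ht)
  · obtain ⟨w', t', ht', h⟩ := mem_iUnion.1 h
    obtain ⟨rfl, rfl⟩ := D.path_inj ⟨ht'.1, ht'.2.trans (hf.1 _).2⟩ ht h
    exact ht'.2

theorem path_image_Icc_subset_grow (hf : f ∈ D.growthSet) (hw : 0 < f w) :
    D.path w '' Icc 0 (f w) ⊆ D.grow f := by
  rintro _ ⟨t, ht, rfl⟩
  rcases ht.1.eq_or_lt with rfl | h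
  · rw [D.path_zero]
    rcases hu : D.parent w with _ | u
    · exact mem_insert _ _
    · exact D.path_mem_grow ⟨one_pos, (hf.2 w u hu hw).ge⟩
  · exact D.path_mem_grow ⟨h, ht.2⟩

theorem isCompact_grow [Finite W] (hf : f ∈ D.growthSet) : IsCompact (D.grow f) := by
  have h : D.grow f = insert q (⋃ w ∈ {w | 0 < f w}, D.path w '' Icc 0 (f w)) := by
    refine (insert_subset_insert (iUnion_subset fun w => ?_)).antisymm
      (insert_subset (mem_insert _ _)
        (iUnion₂_subset fun w hw => D.path_image_Icc_subset_grow hf hw))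
    rintro _ ⟨t, ht, rfl⟩
    exact mem_biUnion (show w ∈ {w | 0 < f w} from ht.1.trans_le ht.2)
      ⟨t, Ioc_subset_Icc_self ht, rfl⟩
  rw [h]
  exact ((toFinite {w | 0 < f w}).isCompact_biUnion fun w _ =>
    isCompact_Icc.image (D.continuous_path w)).insert q

theorem isConnected_grow (hf : f ∈ D.growthSet) : IsConnected (D.grow f) := by
  have hq : q ∈ D.grow f := mem_insert _ _
  have hpath (w : W) : 0 < f w → D.path w '' Icc 0 (f w) ⊆ connectedComponentIn (D.grow f) q := by
    induction w using D.parent_induction with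
    | ih w ih =>
      intro hw
      have hzero : D.path w 0 ∈ connectedComponentIn (D.grow f) q := by
        rw [D.path_zero]
        rcases hu : D.parent w with _ | u
        · exact mem_connectedComponentIn hq
        · have hfu := hf.2 w u hu hw
          exact ih u hu (hfu ▸ one_pos) ⟨1, ⟨zero_le_one, hfu.ge⟩, rfl⟩
      rw [connectedComponentIn_eq hzero]
      exact (isPreconnected_Icc.image _ (D.continuous_path w).continuousOn
        ).subset_connectedComponentIn ⟨0, ⟨le_rfl, hw.le⟩, rfl⟩ (D.path_image_Icc_subset_grow hf hw)
  have hsub : D.grow f ⊆ connectedComponentIn (D.grow f) q := by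
    refine insert_subset (mem_connectedComponentIn hq) (iUnion_subset fun w => ?_)
    rintro _ ⟨t, ht, rfl⟩
    exact hpath w (ht.1.trans_le ht.2) ⟨t, Ioc_subset_Icc_self ht, rfl⟩
  rw [hsub.antisymm (connectedComponentIn_subset _ _)]
  exact isConnected_connectedComponentIn_iff.2 hq

theorem le_of_grow_subset (hf : f ∈ D.growthSet) (hg : g ∈ D.growthSet)
    (h : D.grow f ⊆ D.grow g) (w : W) : f w ≤ g w := by
  rcases (hf.1 w).1.eq_or_lt with h0 | h0
  · rw [← h0]
    exact (hg.1 w).1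
  · exact (D.path_mem_grow_iff hg ⟨h0, (hf.1 w).2⟩).1 (h (D.path_mem_grow ⟨h0, le_rfl⟩))

theorem exists_grow_eq [T2Space Y] [Finite W] {B : Set Y} (hB : IsCompact B)
    (hBc : IsPreconnected B) (hq : q ∈ B) : ∃ f ∈ D.growthSet, D.grow f = B := by
  choose ρ hρ using D.exists_isHeight
  have hmax (w : W) : ∃ y ∈ B, ∀ z ∈ B, ρ w z ≤ ρ w y :=
    hB.exists_isMaxOn ⟨q, hq⟩ (hρ w).continuous.continuousOn
  choose m hmB hm using hmax
  have hmem (w : W) (t : ℝ) (ht : t ∈ Ioc 0 (ρ w (m w))) : D.path w t ∈ B :=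
    (hρ w).path_mem hB.isClosed hBc hq (hmB w) ht
  have hIcc (w : W) : ρ w (m w) ∈ Icc 0 1 :=
    ⟨(hρ w).root.ge.trans (hm w q hq), (hρ w).le_one _⟩
  refine ⟨fun w => ρ w (m w), ⟨hIcc, fun w u hu hw => (hIcc u).2.antisymm ?_⟩,
    (insert_subset hq (iUnion_subset fun w => image_subset_iff.2 (hmem w))).antisymm fun y hy => ?_⟩
  · exact ((hρ u).path_child hu (hIcc w)).ge.trans (hm u _ (hmem w _ ⟨hw, le_rfl⟩))
  · rcases D.eq_root_or_exists y with rfl | ⟨w, t, ht, rfl⟩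
    · exact mem_insert _ _
    · exact D.path_mem_grow
        ⟨ht.1, ((hρ w).path_self (Ioc_subset_Icc_self ht)).ge.trans (hm w _ hy)⟩

end Topological

variable [MetricSpace Y] (D : RootedArcs Y q univ W)

theorem exists_dist_le_of_mem_grow {f g : W → ℝ} (hf : f ∈ D.growthSet) (hg : g ∈ D.growthSet)
    {ε δ : ℝ} (hε : 0 < ε) (hδ : δ ≤ 1)
    (hD : ∀ w, ∀ s ∈ Icc (0 : ℝ) 1, ∀ t ∈ Icc (0 : ℝ) 1, |s - t| < δ →
      dist (D.path w s) (D.path w t) < ε) (hfg : ∀ w, |f w - g w| < δ) :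
    ∀ x ∈ D.grow f, ∃ y ∈ D.grow g, dist x y ≤ ε + ε := by
  rintro x (rfl | hx)
  · exact ⟨x, mem_insert _ _, by rw [dist_self]; positivity⟩
  obtain ⟨w, s, hs, rfl⟩ := mem_iUnion.1 hx
  rcases le_or_gt s (g w) with hsg | hsg
  · exact ⟨_, D.path_mem_grow ⟨hs.1, hsg⟩, by rw [dist_self]; positivity⟩
  have hclose : dist (D.path w s) (D.path w (g w)) < ε := by
    refine hD w s ⟨hs.1.le, hs.2.trans (hf.1 w).2⟩ _ (hg.1 w) ?_
    rw [abs_of_pos (sub_pos.2 hsg)]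
    exact (sub_le_sub_right hs.2 _).trans_lt ((le_abs_self _).trans_lt (hfg w))
  rcases (hg.1 w).1.eq_or_lt with h0 | h0
  · rw [← h0, D.path_zero] at hclose
    rcases hu : D.parent w with _ | u
    · rw [hu] at hclose
      exact ⟨q, mem_insert _ _, hclose.le.trans (by linarith)⟩
    · rw [hu] at hclose
      have hgu := hfg u
      rw [hf.2 w u hu (hs.1.trans_le hs.2)] at hgu
      have hpos : 0 < g u := by linarith [(abs_lt.1 hgu).2]
      exact ⟨_, D.path_mem_grow ⟨hpos, le_rfl⟩, (dist_triangle _ (D.path u 1) _).trans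
        (add_le_add hclose.le (hD u 1 ⟨zero_le_one, le_rfl⟩ _ (hg.1 u) hgu).le)⟩
  · exact ⟨_, D.path_mem_grow ⟨h0, le_rfl⟩, hclose.le.trans (by linarith)⟩

theorem exists_pos_forall_dist_path_lt [Finite W] {ε : ℝ} (hε : 0 < ε) :
    ∃ δ, 0 < δ ∧ δ ≤ 1 ∧ ∀ w, ∀ s ∈ Icc (0 : ℝ) 1, ∀ t ∈ Icc (0 : ℝ) 1, |s - t| < δ →
      dist (D.path w s) (D.path w t) < ε := by
  have h (w : W) : ∀ᶠ δ in 𝓝[>] (0 : ℝ), ∀ s ∈ Icc (0 : ℝ) 1, ∀ t ∈ Icc (0 : ℝ) 1, |s - t| < δ →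
      dist (D.path w s) (D.path w t) < ε := by
    obtain ⟨δ, hδ, h⟩ := Metric.uniformContinuousOn_iff.1
      (isCompact_Icc.uniformContinuousOn_of_continuous (D.continuous_path w).continuousOn) ε hε
    filter_upwards [Ioo_mem_nhdsGT hδ] with η hη s hs t ht hst
    exact h s hs t ht (hst.trans hη.2)
  obtain ⟨δ, hδ, h01⟩ :=
    ((Filter.eventually_all.2 h).and (Ioc_mem_nhdsGT zero_lt_one)).exists
  exact ⟨δ, h01.1, h01.2, hδ⟩

end Grow

section Hyperspace

universe v

variable {Y : Type v} [MetricSpace Y] {q : Y} {W : Type*} [Finite W] (D : RootedArcs Y q univ W)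

/-- The element of `C(q, Y)` determined by a point of the growth set. -/
noncomputable def growCP (f : D.growthSet) : CP Y q :=
  ⟨⟨⟨D.grow f, D.isCompact_grow f.2⟩, (D.isConnected_grow f.2).nonempty⟩, D.isConnected_grow f.2,
    mem_insert _ _⟩

theorem continuous_growCP : Continuous D.growCP := by
  have := Fintype.ofFinite W
  rw [Metric.continuous_iff]
  intro f ε hε
  obtain ⟨δ, hδ, hδ1, hD⟩ := D.exists_pos_forall_dist_path_lt (show 0 < ε / 3 by positivity)
  refine ⟨δ, hδ, fun g hgf => ?_⟩
  have hgf' (w : W) : |g.1 w - f.1 w| < δ := (dist_le_pi_dist g.1 f.1 w).trans_lt hgf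
  have hfg' (w : W) : |f.1 w - g.1 w| < δ := abs_sub_comm (g.1 w) _ ▸ hgf' w
  have hdist : Metric.hausdorffDist (D.grow g) (D.grow f) ≤ ε / 3 + ε / 3 :=
    Metric.hausdorffDist_le_of_mem_dist (by positivity)
      (D.exists_dist_le_of_mem_grow g.2 f.2 (by positivity) hδ1 hD hgf')
      (D.exists_dist_le_of_mem_grow f.2 g.2 (by positivity) hδ1 hD hfg')
  change Metric.hausdorffDist (D.grow g) (D.grow f) < ε
  linarith

theorem bijective_growCP : Function.Bijective D.growCP := by
  constructor
  · intro f g hfg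
    have h : D.grow f = D.grow g := congr_arg CP.set hfg
    exact Subtype.ext (funext fun w => (D.le_of_grow_subset f.2 g.2 h.subset w).antisymm
      (D.le_of_grow_subset g.2 f.2 h.superset w))
  · rintro ⟨B, hBc, hB⟩
    obtain ⟨f, hf, h⟩ := D.exists_grow_eq B.isCompact hBc.isPreconnected hB
    exact ⟨⟨f, hf⟩, Subtype.ext (NonemptyCompacts.ext h)⟩

theorem cellDims_CP : cellDims (CP Y q) = D.boundaryCards := by
  have := isCompact_iff_compactSpace.1 (RootedForest.isCompact_growthSet (P := D.toRootedForest))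
  let e : D.growthSet ≃ₜ CP Y q := Continuous.homeoOfEquivCompactToT2
    (f := Equiv.ofBijective _ D.bijective_growCP) D.continuous_growCP
  rw [← cellDims_eq_of_homeomorph e, RootedForest.cellDims_growthSet]

end Hyperspace

end RootedArcs

section Concat

variable {Y : Type*} {α β : ℝ → Y}

/-- The concatenation of two paths parametrized by `[0, 1]`. -/
noncomputable def concat (α β : ℝ → Y) (t : ℝ) : Y :=
  if t ≤ 1 / 2 then α (2 * t) else β (2 * t - 1)

theorem concat_zero : concat α β 0 = α 0 := by
  simp [concat]

theorem concat_one : concat α β 1 = β 1 := by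
  norm_num [concat]

theorem continuous_concat [TopologicalSpace Y] (hα : Continuous α) (hβ : Continuous β)
    (h : α 1 = β 0) : Continuous (concat α β) := by
  refine Continuous.if_le (by fun_prop) (by fun_prop) continuous_id continuous_const ?_
  rintro t rfl
  norm_num [h]

theorem concat_eq_or {t : ℝ} (ht : t ∈ Ioc (0 : ℝ) 1) :
    (∃ s ∈ Ioc (0 : ℝ) 1, t = s / 2 ∧ concat α β t = α s) ∨
      ∃ s ∈ Ioc (0 : ℝ) 1, t = (s + 1) / 2 ∧ concat α β t = β s := by
  by_cases h : t ≤ 1 / 2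
  · exact .inl ⟨2 * t, ⟨by linarith [ht.1], by linarith⟩, by ring, if_pos h⟩
  · exact .inr ⟨2 * t - 1, ⟨by linarith, by linarith [ht.2]⟩, by ring, if_neg h⟩

theorem image_concat_Ioc : concat α β '' Ioc 0 1 = α '' Ioc 0 1 ∪ β '' Ioc 0 1 := by
  refine Subset.antisymm ?_ (union_subset ?_ ?_)
  · rintro _ ⟨t, ht, rfl⟩
    rcases concat_eq_or (α := α) (β := β) ht with ⟨s, hs, -, h⟩ | ⟨s, hs, -, h⟩
    exacts [.inl ⟨s, hs, h.symm⟩, .inr ⟨s, hs, h.symm⟩]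
  · rintro _ ⟨s, hs, rfl⟩
    refine ⟨s / 2, ⟨by linarith [hs.1], by linarith [hs.2]⟩, ?_⟩
    rw [concat, if_pos (by linarith [hs.2]), mul_div_cancel₀ _ two_ne_zero]
  · rintro _ ⟨s, hs, rfl⟩
    refine ⟨(s + 1) / 2, ⟨by linarith [hs.1], by linarith [hs.2]⟩, ?_⟩
    rw [concat, if_neg (by linarith [hs.1]), mul_div_cancel₀ _ two_ne_zero, add_sub_cancel_right]

theorem injOn_concat (hα : InjOn α (Ioc 0 1)) (hβ : InjOn β (Ioc 0 1))
    (h : Disjoint (α '' Ioc 0 1) (β '' Ioc 0 1)) : InjOn (concat α β) (Ioc 0 1) := by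
  intro t ht t' ht' heq
  have hne {s s' : ℝ} (hs : s ∈ Ioc (0 : ℝ) 1) (hs' : s' ∈ Ioc (0 : ℝ) 1) : α s ≠ β s' :=
    h.ne_of_mem (mem_image_of_mem _ hs) (mem_image_of_mem _ hs')
  rcases concat_eq_or (α := α) (β := β) ht with ⟨s, hs, rfl, hts⟩ | ⟨s, hs, rfl, hts⟩ <;>
    rcases concat_eq_or (α := α) (β := β) ht' with ⟨s', hs', rfl, hts'⟩ | ⟨s', hs', rfl, hts'⟩ <;>
    rw [hts, hts'] at heq
  · rw [hα hs hs' heq]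
  · exact absurd heq (hne hs hs')
  · exact absurd heq.symm (hne hs' hs)
  · rw [hβ hs hs' heq]

end Concat

theorem image_Ioc_eq_sdiff {Y : Type*} {γ : ℝ → Y} (hγ : InjOn γ (Icc 0 1)) :
    γ '' Ioc 0 1 = (γ '' Icc 0 1) \ {γ 0} := by
  rw [← Icc_sdiff_left, hγ.image_sdiff_subset (singleton_subset_iff.2 (by simp)), image_singleton]

theorem isSimpleClosedCurve_image_Ioc {Y : Type*} [TopologicalSpace Y] [T2Space Y] {γ : ℝ → Y}
    (hγ : Continuous γ) (hinj : InjOn γ (Ioc 0 1)) (h : γ 0 = γ 1) :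
    IsSimpleClosedCurve (γ '' Ioc 0 1) := by
  have : Fact ((0 : ℝ) < 1) := ⟨one_pos⟩
  let F : AddCircle (1 : ℝ) → Y := AddCircle.liftIoc 1 0 γ
  have hF {t : ℝ} (ht : t ∈ Ioc (0 : ℝ) 1) : F t = γ t := AddCircle.liftIoc_zero_coe_apply ht
  have hcover : ((↑) : ℝ → AddCircle (1 : ℝ)) '' Ioc 0 1 = univ := by
    simpa only [zero_add] using AddCircle.coe_image_Ioc_eq (1 : ℝ) 0
  have hcont : Continuous F :=
    AddCircle.liftIoc_continuous (by rwa [zero_add]) hγ.continuousOn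
  have hFinj : Function.Injective F := by
    intro x y hxy
    obtain ⟨s, hs, rfl⟩ := hcover.superset (mem_univ x)
    obtain ⟨t, ht, rfl⟩ := hcover.superset (mem_univ y)
    rw [hF hs, hF ht] at hxy
    rw [hinj hs ht hxy]
  have hrange : range F = γ '' Ioc 0 1 := by
    rw [← image_univ, ← hcover, image_image]
    exact image_congr fun t ht => hF ht
  have hemb := (hcont.isClosedEmbedding hFinj).isEmbedding
  exact ⟨((Homeomorph.setCongr hrange).symm.trans hemb.toHomeomorph.symm).trans
    (AddCircle.homeomorphCircle one_ne_zero)⟩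

theorem IsArcSet.exists_isArcFromTo {Y : Type*} [TopologicalSpace Y] {A : Set Y}
    (hA : IsArcSet A) : ∃ a b, IsArcFromTo A a b :=
  let ⟨h⟩ := hA
  ⟨_, _, h.symm, rfl, rfl⟩

namespace IsArcFromTo

variable {Y : Type*} [TopologicalSpace Y] {A B : Set Y} {a b c x : Y}

theorem exists_path (hA : IsArcFromTo A a b) : ∃ γ : ℝ → Y, Continuous γ ∧
    InjOn γ (Icc 0 1) ∧ γ '' Icc 0 1 = A ∧ γ 0 = a ∧ γ 1 = b := by
  obtain ⟨h, h₀, h₁⟩ := hA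
  have hγ {t : ℝ} (ht : t ∈ Icc (0 : ℝ) 1) :
      (h (projIcc 0 1 zero_le_one t) : Y) = h ⟨t, ht⟩ := by
    rw [projIcc_of_mem]
  refine ⟨fun t => h (projIcc 0 1 zero_le_one t), by fun_prop, fun s hs t ht hst => ?_, ?_,
    (hγ (left_mem_Icc.2 zero_le_one)).trans h₀, (hγ (right_mem_Icc.2 zero_le_one)).trans h₁⟩
  · simp only [hγ hs, hγ ht] at hst
    exact congrArg Subtype.val (h.injective (Subtype.ext hst))
  · ext y
    constructor
    · rintro ⟨t, -, rfl⟩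
      exact Subtype.coe_prop _
    · intro hy
      refine ⟨h.symm ⟨y, hy⟩, (h.symm ⟨y, hy⟩).2, ?_⟩
      simp only [projIcc_val, h.apply_symm_apply]

theorem image_Icc [T2Space Y] {γ : ℝ → Y} (hγ : Continuous γ) {s t : ℝ} (hst : s < t)
    (hinj : InjOn γ (Icc s t)) : IsArcFromTo (γ '' Icc s t) (γ s) (γ t) := by
  have hemb : IsEmbedding ((Icc s t).domRestrict γ) :=
    ((hγ.comp continuous_subtype_val).isClosedEmbedding hinj.injective).isEmbedding
  let h : Icc (0 : ℝ) 1 ≃ₜ γ '' Icc s t := (iccHomeoI s t hst).symm.trans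
    (hemb.toHomeomorph.trans (Homeomorph.setCongr (range_domRestrict γ (Icc s t))))
  have hh (x : Icc (0 : ℝ) 1) : (h x : Y) = γ ((iccHomeoI s t hst).symm x) := rfl
  refine ⟨h, ?_, ?_⟩ <;> rw [hh, iccHomeoI_symm_apply_coe] <;> simp

theorem left_mem (hA : IsArcFromTo A a b) : a ∈ A := by
  obtain ⟨h, rfl, -⟩ := hA
  exact Subtype.coe_prop _

theorem right_mem (hA : IsArcFromTo A a b) : b ∈ A := by
  obtain ⟨h, -, rfl⟩ := hA
  exact Subtype.coe_prop _

theorem ne (hA : IsArcFromTo A a b) : a ≠ b := by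
  obtain ⟨γ, -, hinj, -, rfl, rfl⟩ := hA.exists_path
  exact hinj.ne (left_mem_Icc.2 zero_le_one) (right_mem_Icc.2 zero_le_one) zero_ne_one

theorem symm (hA : IsArcFromTo A a b) : IsArcFromTo A b a := by
  obtain ⟨h, rfl, rfl⟩ := hA
  exact ⟨unitInterval.symmHomeomorph.trans h, congrArg (fun x => (h x : Y)) unitInterval.symm_zero,
    congrArg (fun x => (h x : Y)) unitInterval.symm_one⟩

theorem isClosed [T2Space Y] (hA : IsArcFromTo A a b) : IsClosed A := by
  obtain ⟨γ, hγ, -, rfl, -⟩ := hA.exists_path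
  exact (isCompact_Icc.image hγ).isClosed

theorem isPreconnected_sdiff_left (hA : IsArcFromTo A a b) : IsPreconnected (A \ {a}) := by
  obtain ⟨γ, hγ, hinj, rfl, rfl, rfl⟩ := hA.exists_path
  rw [← image_Ioc_eq_sdiff hinj]
  exact isPreconnected_Ioc.image γ hγ.continuousOn

theorem exists_path_union (hA : IsArcFromTo A a b) (hB : IsArcFromTo B b c)
    (h : Disjoint (A \ {a}) (B \ {b})) : ∃ γ : ℝ → Y, Continuous γ ∧ InjOn γ (Ioc 0 1) ∧
      γ '' Ioc 0 1 = A \ {a} ∪ B \ {b} ∧ γ 0 = a ∧ γ 1 = c := by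
  obtain ⟨α, hα, hαinj, rfl, rfl, rfl⟩ := hA.exists_path
  obtain ⟨β, hβ, hβinj, rfl, hβ₀, rfl⟩ := hB.exists_path
  rw [← hβ₀, ← image_Ioc_eq_sdiff hαinj, ← image_Ioc_eq_sdiff hβinj] at h
  refine ⟨concat α β, continuous_concat hα hβ hβ₀.symm, injOn_concat
    (hαinj.mono Ioc_subset_Icc_self) (hβinj.mono Ioc_subset_Icc_self) h, ?_, concat_zero,
    concat_one⟩
  rw [image_concat_Ioc, ← hβ₀, image_Ioc_eq_sdiff hαinj, image_Ioc_eq_sdiff hβinj]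

theorem trans [T2Space Y] (hA : IsArcFromTo A a b) (hB : IsArcFromTo B b c) (h : A ∩ B ⊆ {b}) :
    IsArcFromTo (A ∪ B) a c := by
  obtain ⟨γ, hγ, hinj, himage, rfl, rfl⟩ := hA.exists_path_union hB
    (disjoint_left.2 fun y hy hy' => hy'.2 (h ⟨hy.1, hy'.1⟩))
  have hnot : γ 0 ∉ γ '' Ioc 0 1 := by
    rw [himage]
    rintro (hy | hy)
    exacts [hy.2 rfl, hy.2 (h ⟨hA.left_mem, hy.1⟩)]
  have hIcc : γ '' Icc 0 1 = A ∪ B := by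
    rw [← Ioc_insert_left zero_le_one, image_insert_eq, himage, ← insert_union,
      insert_sdiff_self_of_mem hA.left_mem]
    ext y
    by_cases hy : y = b <;> simp [hy, hA.right_mem]
  rw [← hIcc]
  refine image_Icc hγ one_pos ?_
  rw [← Ioc_insert_left zero_le_one]
  exact (injOn_insert (by simp)).2 ⟨hinj, hnot⟩

theorem isSimpleClosedCurve_union [T2Space Y] (hA : IsArcFromTo A a b) (hB : IsArcFromTo B b a)
    (h : A ∩ B ⊆ {a, b}) : IsSimpleClosedCurve (A ∪ B) := by
  obtain ⟨γ, hγ, hinj, himage, rfl, h₁⟩ := hA.exists_path_union hB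
    (disjoint_left.2 fun y hy hy' => (h ⟨hy.1, hy'.1⟩).elim hy.2 hy'.2)
  have hunion : A ∪ B = γ '' Ioc 0 1 := by
    rw [himage]
    ext y
    by_cases hy : y = b
    · simp [hy, hA.right_mem, hA.ne.symm]
    · by_cases hy' : y = γ 0 <;> simp [hy, hy', hB.right_mem, hA.ne]
  rw [hunion]
  exact isSimpleClosedCurve_image_Ioc hγ hinj h₁.symm

theorem split [T2Space Y] (hA : IsArcFromTo A a b) (hc : c ∈ A) (hca : c ≠ a) (hcb : c ≠ b) :
    ∃ B C, IsArcFromTo B a c ∧ IsArcFromTo C c b ∧ B ∪ C = A ∧ B ∩ C = {c} := by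
  obtain ⟨γ, hγ, hinj, rfl, rfl, rfl⟩ := hA.exists_path
  obtain ⟨t, ht, rfl⟩ := hc
  have ht₀ : 0 < t := ht.1.lt_of_ne' fun h => hca (congrArg γ h)
  have ht₁ : t < 1 := ht.2.lt_of_ne fun h => hcb (congrArg γ h)
  refine ⟨γ '' Icc 0 t, γ '' Icc t 1, image_Icc hγ ht₀ (hinj.mono (Icc_subset_Icc_right ht.2)),
    image_Icc hγ ht₁ (hinj.mono (Icc_subset_Icc_left ht.1)), ?_, ?_⟩
  · rw [← image_union, Icc_union_Icc_eq_Icc ht.1 ht.2]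
  · rw [← hinj.image_inter (Icc_subset_Icc_right ht.2) (Icc_subset_Icc_left ht.1),
      Icc_inter_Icc_eq_singleton ht.1 ht.2, image_singleton]

theorem eq_or_eq_of_isArcEndpoint [T2Space Y] (hA : IsArcFromTo A a b) (hx : IsArcEndpoint A x) :
    x = a ∨ x = b := by
  by_contra! hne
  obtain ⟨y, hxy⟩ := hx
  obtain ⟨B, C, hB, hC, hunion, hinter⟩ := hA.split hxy.left_mem hne.1 hne.2
  have hpre := isPreconnected_closed_iff.1 hxy.isPreconnected_sdiff_left B C hB.isClosed hC.isClosed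
    (hunion ▸ sdiff_subset) ⟨a, ⟨hA.left_mem, hne.1.symm⟩, hB.left_mem⟩
    ⟨b, ⟨hA.right_mem, hne.2.symm⟩, hC.right_mem⟩
  obtain ⟨z, hz, hz'⟩ := hpre
  exact hz.2 (hinter.subset hz')

end IsArcFromTo

/-- Any two distinct points of `Z` are the end points of an arc in `Z`. -/
def IsArcwiseConnected {Y : Type*} [TopologicalSpace Y] (Z : Set Y) : Prop :=
  ∀ ⦃a⦄, a ∈ Z → ∀ ⦃b⦄, b ∈ Z → a ≠ b → ∃ A ⊆ Z, IsArcFromTo A a b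

section IsArcwiseConnected

variable {Y : Type*} [TopologicalSpace Y] [T2Space Y] {Z Z' A : Set Y} {a b c : Y}

theorem IsArcFromTo.isArcwiseConnected (hA : IsArcFromTo A a b) : IsArcwiseConnected A := by
  obtain ⟨γ, hγ, hinj, rfl, -⟩ := hA.exists_path
  have hlt {s t : ℝ} (hs : 0 ≤ s) (hst : s < t) (ht : t ≤ 1) :
      ∃ B ⊆ γ '' Icc 0 1, IsArcFromTo B (γ s) (γ t) :=
    ⟨γ '' Icc s t, image_mono (Icc_subset_Icc hs ht),
      .image_Icc hγ hst (hinj.mono (Icc_subset_Icc hs ht))⟩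
  rintro _ ⟨s, hs, rfl⟩ _ ⟨t, ht, rfl⟩ hne
  rcases lt_trichotomy s t with hst | rfl | hst
  · exact hlt hs.1 hst ht.2
  · exact absurd rfl hne
  · obtain ⟨B, hB, harc⟩ := hlt ht.1 hst hs.2
    exact ⟨B, hB, harc.symm⟩

theorem IsArcwiseConnected.union (hZ : IsArcwiseConnected Z) (hZ' : IsArcwiseConnected Z')
    (h : Z ∩ Z' = {c}) : IsArcwiseConnected (Z ∪ Z') := by
  have hc : c ∈ Z ∩ Z' := h.superset rfl
  have hmix {a b : Y} (ha : a ∈ Z) (hb : b ∈ Z') (hab : a ≠ b) :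
      ∃ A ⊆ Z ∪ Z', IsArcFromTo A a b := by
    rcases eq_or_ne a c with rfl | hac
    · obtain ⟨B, hB, harc⟩ := hZ' hc.2 hb hab
      exact ⟨B, hB.trans subset_union_right, harc⟩
    rcases eq_or_ne c b with rfl | hcb
    · obtain ⟨B, hB, harc⟩ := hZ ha hc.1 hab
      exact ⟨B, hB.trans subset_union_left, harc⟩
    obtain ⟨B, hB, hB'⟩ := hZ ha hc.1 hac
    obtain ⟨C, hC, hC'⟩ := hZ' hc.2 hb hcb
    exact ⟨B ∪ C, union_subset_union hB hC,
      hB'.trans hC' ((inter_subset_inter hB hC).trans h.subset)⟩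
  rintro a (ha | ha) b (hb | hb) hab
  · obtain ⟨A, hA, harc⟩ := hZ ha hb hab
    exact ⟨A, hA.trans subset_union_left, harc⟩
  · exact hmix ha hb hab
  · obtain ⟨A, hA, harc⟩ := hmix hb ha hab.symm
    exact ⟨A, hA, harc.symm⟩
  · obtain ⟨A, hA, harc⟩ := hZ' ha hb hab
    exact ⟨A, hA.trans subset_union_right, harc⟩

end IsArcwiseConnected

namespace RootedForest

variable {W : Type*} (P : RootedForest W)

/-- The forest obtained from `P` by attaching a family `J` of leaves to the vertex `a`, or a family
of roots if `a` is `none`. -/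
def attach (a : Option W) (J : Type*) : RootedForest (W ⊕ J) where
  parent := Sum.elim (fun w => (P.parent w).map .inl) fun _ => a.map .inl
  depth := Sum.elim P.depth fun _ => a.elim 0 fun w => P.depth w + 1
  depth_lt {x y} hxy := by
    rcases x with w | j
    · obtain ⟨u, hu, rfl⟩ := Option.map_eq_some_iff.1 hxy
      exact P.depth_lt hu
    · obtain ⟨u, rfl, rfl⟩ := Option.map_eq_some_iff.1 hxy
      exact Nat.lt_succ_self _

theorem isNodForest_attach {P : RootedForest W} (hP : P.roots = univ) (a : Option W) (J : Type*)
    [Finite J] (hJ : 2 ≤ Nat.card J) : (P.attach a J).IsNodForest := by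
  have hparent (w : W) : P.parent w = none := hP.superset (mem_univ w)
  have hroots (w : W) : .inl w ∈ (P.attach a J).roots := by simp [roots, attach, hparent w]
  rcases a with _ | w₀
  · refine .inl (eq_univ_of_forall ?_)
    rintro (w | j)
    exacts [hroots w, rfl]
  · have hchildren : (P.attach (some w₀) J).children (.inl w₀) = range .inr := by
      ext x
      rcases x with w | j
      · simp [children, attach, hparent w]
      · simp [children, attach]
    refine .inr ⟨.inl w₀, ⟨hroots w₀, ?_⟩, ?_⟩
    · rintro (w | j)
      exacts [.inl (hroots w), .inr rfl]
    · rwa [hchildren, ← image_univ, ncard_image_of_injective _ Sum.inr_injective, ncard_univ]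

open Classical in
/-- The forest obtained from `P` by removing the vertex `w`, whose only child `u` becomes a child
of the parent of `w`. -/
noncomputable def suppress {w u : W} (hu : P.children w = {u}) : RootedForest {x // x ≠ w} where
  parent x := (if x.1 = u then P.parent w else P.parent x).pmap Subtype.mk (by
    rintro v hv rfl
    split_ifs at hv with h
    · exact lt_irrefl _ (P.depth_lt hv)
    · exact h (hu.subset hv))
  depth x := P.depth x
  depth_lt {x y} hxy := by
    have hv : (if x.1 = u then P.parent w else P.parent x) = some y.1 := by
      simpa only [Option.map_pmap, Option.pmap_eq_map, Option.map_id', Option.map_some] using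
        congrArg (Option.map Subtype.val) hxy
    split_ifs at hv with h
    · have hwu : P.parent x = some w := h ▸ hu.superset rfl
      exact (P.depth_lt hv).trans (P.depth_lt hwu)
    · exact P.depth_lt hv

end RootedForest

namespace RootedArcs

variable {Y : Type*} [TopologicalSpace Y] {q : Y} {Z : Set Y} {W : Type*}

/-- The vertices of a rooted tree as points of the space, the root being indexed by `none`. -/
def vertex (D : RootedArcs Y q Z W) (a : Option W) : Y :=
  a.elim q fun w => D.path w 1

theorem vertex_mem (D : RootedArcs Y q Z W) (a : Option W) : D.vertex a ∈ Z := by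
  refine D.carrier_eq.subset ?_
  rcases a with _ | w
  exacts [mem_insert _ _, mem_insert_of_mem _ (mem_iUnion.2 ⟨w, 1, ⟨one_pos, le_rfl⟩, rfl⟩)]

theorem image_path_subset (D : RootedArcs Y q Z W) (w : W) : D.path w '' Ioc 0 1 ⊆ Z :=
  ((subset_iUnion _ w).trans (subset_insert _ _)).trans D.carrier_eq.subset

/-- The tree consisting of a root only. -/
def point (q : Y) : RootedArcs Y q {q} PEmpty.{1} where
  parent := PEmpty.elim
  depth := PEmpty.elim
  depth_lt {w} := w.elim
  path := PEmpty.elim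
  continuous_path w := w.elim
  path_zero w := w.elim
  injOn_path w := w.elim
  disjoint_path {w} := w.elim
  root_notMem w := w.elim
  carrier_eq := by simp

/-- The tree obtained by attaching arcs `γ j`, where `j : J`, at the vertex `a`. -/
def attach (D : RootedArcs Y q Z W) (a : Option W) {J : Type*} {γ : J → ℝ → Y}
    (hγ : ∀ j, Continuous (γ j)) (h₀ : ∀ j, γ j 0 = D.vertex a) (hinj : ∀ j, InjOn (γ j) (Ioc 0 1))
    (hγZ : ∀ j, Disjoint (γ j '' Ioc 0 1) Z)
    (hγγ : Pairwise fun j k => Disjoint (γ j '' Ioc 0 1) (γ k '' Ioc 0 1)) :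
    RootedArcs Y q (Z ∪ ⋃ j, γ j '' Ioc 0 1) (W ⊕ J) where
  toRootedForest := D.toRootedForest.attach a J
  path := Sum.elim D.path γ
  continuous_path := Sum.rec D.continuous_path hγ
  path_zero := by
    rintro (w | j)
    · refine (D.path_zero w).trans ?_
      simp only [RootedForest.attach, Sum.elim_inl, Option.elim_map]
      rfl
    · refine (h₀ j).trans ?_
      simp only [RootedForest.attach, Sum.elim_inr, Option.elim_map]
      rfl
  injOn_path := Sum.rec D.injOn_path hinj
  disjoint_path := by
    rintro (w | j) (w' | j') hne
    · exact D.disjoint_path fun h => hne (congrArg _ h)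
    · exact ((hγZ j').mono_right (D.image_path_subset w)).symm
    · exact (hγZ j).mono_right (D.image_path_subset w')
    · exact hγγ fun h => hne (congrArg _ h)
  root_notMem := by
    rintro (w | j)
    · exact D.root_notMem w
    · exact disjoint_right.1 (hγZ j) (D.vertex_mem none)
  carrier_eq := by
    simp only [iUnion_sum, Sum.elim_inl, Sum.elim_inr]
    rw [← insert_union, D.carrier_eq]

theorem exists_attach (D : RootedArcs Y q Z W) (a : Option W) {J : Type*} {A : J → Set Y}
    {b : J → Y} (hA : ∀ j, IsArcFromTo (A j) (D.vertex a) (b j))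
    (hAZ : ∀ j, A j ∩ Z ⊆ {D.vertex a})
    (hAA : Pairwise fun j k => A j ∩ A k ⊆ {D.vertex a}) :
    ∃ D' : RootedArcs Y q (Z ∪ ⋃ j, A j) (W ⊕ J),
      D'.toRootedForest = D.toRootedForest.attach a J ∧
        range D'.vertex = range D.vertex ∪ range b := by
  choose γ hγ hinj himage h₀ h₁ using fun j => (hA j).exists_path
  have hIoc (j : J) : γ j '' Ioc 0 1 = A j \ {D.vertex a} := by
    rw [image_Ioc_eq_sdiff (hinj j), himage, h₀]
  let D' := D.attach a hγ h₀ (fun j => (hinj j).mono Ioc_subset_Icc_self)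
    (fun j => by
      rw [hIoc]
      exact disjoint_left.2 fun y hy hyZ => hy.2 (hAZ j ⟨hy.1, hyZ⟩))
    (fun j k hjk => by
      change Disjoint _ _
      rw [hIoc, hIoc]
      exact disjoint_left.2 fun y hy hy' => hy.2 (hAA hjk ⟨hy.1, hy'.1⟩))
  have hcarrier : Z ∪ ⋃ j, γ j '' Ioc 0 1 = Z ∪ ⋃ j, A j := by
    simp only [hIoc, ← iUnion_sdiff]
    ext y
    by_cases hy : y = D.vertex a <;> simp [hy, D.vertex_mem a]
  rw [← hcarrier]
  refine ⟨D', rfl, Subset.antisymm ?_ (union_subset ?_ ?_)⟩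
  · rintro _ ⟨_ | w | j, rfl⟩
    exacts [.inl ⟨none, rfl⟩, .inl ⟨some w, rfl⟩, .inr ⟨j, (h₁ j).symm⟩]
  · rintro _ ⟨_ | w, rfl⟩
    exacts [⟨none, rfl⟩, ⟨some (.inl w), rfl⟩]
  · rintro _ ⟨j, rfl⟩
    exact ⟨some (.inr j), h₁ j⟩

section Suppress

variable (D : RootedArcs Y q Z W) {w u : W}

open Classical in
/-- The paths of a rooted tree after those of a vertex `w` and its child `u` have been joined. -/
noncomputable def joinPath (w u x : W) : ℝ → Y :=
  if x = u then concat (D.path w) (D.path u) else D.path x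

@[simp]
theorem joinPath_self : D.joinPath w u u = concat (D.path w) (D.path u) := if_pos rfl

theorem joinPath_of_ne {x : W} (hx : x ≠ u) : D.joinPath w u x = D.path x := if_neg hx

theorem joinPath_one (x : W) : D.joinPath w u x 1 = D.path x 1 := by
  rcases eq_or_ne x u with rfl | hx
  · rw [joinPath_self, concat_one]
  · rw [joinPath_of_ne D hx]

theorem disjoint_joinPath {x y : W} (hx : x ≠ w) (hy : y ≠ w) (hxy : x ≠ y) :
    Disjoint (D.joinPath w u x '' Ioc 0 1) (D.joinPath w u y '' Ioc 0 1) := by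
  rcases eq_or_ne x u with rfl | hxu
  · rw [joinPath_self, joinPath_of_ne D hxy.symm, image_concat_Ioc, disjoint_union_left]
    exact ⟨D.disjoint_path hy.symm, D.disjoint_path hxy⟩
  rcases eq_or_ne y u with rfl | hyu
  · rw [joinPath_self, joinPath_of_ne D hxy, image_concat_Ioc, disjoint_union_right]
    exact ⟨D.disjoint_path hx, D.disjoint_path hxy⟩
  · rw [joinPath_of_ne D hxu, joinPath_of_ne D hyu]
    exact D.disjoint_path hxy

theorem iUnion_image_joinPath (huw : u ≠ w) :
    ⋃ x : {x // x ≠ w}, D.joinPath w u x '' Ioc 0 1 = ⋃ x, D.path x '' Ioc 0 1 := by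
  have hpath (x : W) : D.path x '' Ioc 0 1 ⊆ ⋃ x, D.path x '' Ioc 0 1 :=
    subset_iUnion (fun x => D.path x '' Ioc 0 1) x
  have hjoin {x : W} (hx : x ≠ w) : D.joinPath w u x '' Ioc 0 1 ⊆
      ⋃ x : {x // x ≠ w}, D.joinPath w u x '' Ioc 0 1 :=
    subset_iUnion (fun x : {x // x ≠ w} => D.joinPath w u x '' Ioc 0 1) ⟨x, hx⟩
  have hu := hjoin huw
  rw [joinPath_self, image_concat_Ioc] at hu
  refine Subset.antisymm (iUnion_subset fun x => ?_) (iUnion_subset fun x => ?_)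
  · rcases eq_or_ne x.1 u with hx | hx
    · rw [hx, joinPath_self, image_concat_Ioc]
      exact union_subset (hpath w) (hpath u)
    · rw [joinPath_of_ne D hx]
      exact hpath x
  · rcases eq_or_ne x w with rfl | hxw
    · exact subset_union_left.trans hu
    rcases eq_or_ne x u with rfl | hxu
    · exact subset_union_right.trans hu
    · rw [← joinPath_of_ne D hxu (w := w)]
      exact hjoin hxw

/-- The same tree with a vertex `w` having exactly one child `u` suppressed: the arcs of `w` and `u`
are joined to a single arc. -/
noncomputable def suppress (hu : D.children w = {u}) : RootedArcs Y q Z {x // x ≠ w} where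
  toRootedForest := D.toRootedForest.suppress hu
  path x := D.joinPath w u x
  continuous_path x := by
    rcases eq_or_ne x.1 u with hx | hx
    · have hwu : D.parent u = some w := hu.superset rfl
      rw [hx, joinPath_self]
      refine continuous_concat (D.continuous_path _) (D.continuous_path _) ?_
      rw [D.path_zero u, hwu, Option.elim_some]
    · rw [joinPath_of_ne D hx]
      exact D.continuous_path _
  path_zero x := by
    simp only [joinPath_one, RootedForest.suppress, Option.elim_pmap]
    change _ = Option.pelim _ q fun v _ => D.path v 1
    rw [Option.pelim_eq_elim]
    rcases eq_or_ne x.1 u with hx | hx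
    · rw [if_pos hx, hx, joinPath_self, concat_zero, D.path_zero]
    · rw [if_neg hx, joinPath_of_ne D hx, D.path_zero]
  injOn_path x := by
    rcases eq_or_ne x.1 u with hx | hx
    · rw [hx, joinPath_self]
      exact injOn_concat (D.injOn_path w) (D.injOn_path u) (D.disjoint_path (hx ▸ x.2.symm))
    · rw [joinPath_of_ne D hx]
      exact D.injOn_path _
  disjoint_path {x y} hxy := D.disjoint_joinPath x.2 y.2 fun h => hxy (Subtype.ext h)
  root_notMem x := by
    rcases eq_or_ne x.1 u with hx | hx
    · rw [hx, joinPath_self, image_concat_Ioc]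
      exact fun h => h.elim (D.root_notMem w) (D.root_notMem u)
    · rw [joinPath_of_ne D hx]
      exact D.root_notMem x
  carrier_eq := by
    have hwu : D.parent u = some w := hu.superset rfl
    rw [iUnion_image_joinPath D fun h => (D.depth_lt hwu).ne (congrArg D.depth h.symm),
      D.carrier_eq]

end Suppress

theorem exists_isReduced {W : Type} [Finite W] (D : RootedArcs Y q Z W) :
    ∃ (W' : Type) (_ : Finite W') (D' : RootedArcs Y q Z W'), D'.IsReduced := by
  induction h : Nat.card W using Nat.strong_induction_on generalizing W with
  | _ n ih =>
    by_cases hred : D.IsReduced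
    · exact ⟨W, ‹_›, D, hred⟩
    · obtain ⟨w, hw⟩ : ∃ w, (D.children w).ncard = 1 := by
        simpa [RootedForest.IsReduced] using hred
      obtain ⟨u, hu⟩ := ncard_eq_one.1 hw
      exact ih _ (h ▸ Finite.card_subtype_lt (x := w) (by simp)) (D.suppress hu) rfl

end RootedArcs

section Tree

variable {Y : Type*} [TopologicalSpace Y] [T2Space Y] {q : Y} {A B : Set Y} {a b : Y}
  {𝒥 : Set (Set Y)}

theorem IsArcFromTo.exists_rootedArcs (hA : IsArcFromTo A a b) (hq : q ∈ A) :
    ∃ (W : Type) (_ : Finite W) (D : RootedArcs Y q A W),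
      D.roots = univ ∧ a ∈ range D.vertex ∧ b ∈ range D.vertex := by
  suffices h : ∃ (J : Type) (_ : Finite J) (B : J → Set Y) (c : J → Y),
      (∀ j, IsArcFromTo (B j) q (c j)) ∧ (Pairwise fun j k => B j ∩ B k ⊆ {q}) ∧
        {q} ∪ ⋃ j, B j = A ∧ {a, b} ⊆ insert q (range c) by
    obtain ⟨J, hJ, B, c, hB, hBB, rfl, hab⟩ := h
    obtain ⟨D, hD, hrange⟩ := (RootedArcs.point q).exists_attach none hB
      (fun j => inter_subset_right) hBB
    have hsub : insert q (range c) ⊆ range D.vertex := by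
      rw [hrange, insert_eq]
      exact union_subset_union_left _ (singleton_subset_iff.2 ⟨none, rfl⟩)
    refine ⟨PEmpty ⊕ J, inferInstance, D, ?_, hsub (hab (mem_insert _ _)), hsub (hab (.inr rfl))⟩
    rw [hD]
    refine eq_univ_of_forall ?_
    rintro (x | j)
    exacts [x.elim, rfl]
  rcases eq_or_ne q a with rfl | hqa
  · refine ⟨Unit, inferInstance, fun _ => A, fun _ => b, fun _ => hA, Subsingleton.pairwise, ?_, ?_⟩
    · rw [iUnion_const, singleton_union, insert_eq_of_mem hq]
    · rw [range_const]
  rcases eq_or_ne q b with rfl | hqb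
  · refine ⟨Unit, inferInstance, fun _ => A, fun _ => a, fun _ => hA.symm, Subsingleton.pairwise,
      ?_, ?_⟩
    · rw [iUnion_const, singleton_union, insert_eq_of_mem hq]
    · rw [range_const, pair_comm]
  · obtain ⟨B, C, hB, hC, hunion, hinter⟩ := hA.split hq hqa hqb
    refine ⟨Bool, inferInstance, fun i => cond i B C, fun i => cond i a b, ?_, ?_, ?_, ?_⟩
    · rintro (_ | _)
      exacts [hC, hB.symm]
    · rintro (_ | _) (_ | _) h
      exacts [absurd rfl h, (inter_comm C B).trans hinter |>.subset, hinter.subset, absurd rfl h]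
    · rw [← union_eq_iUnion, hunion, singleton_union, insert_eq_of_mem hq]
    · rintro _ (rfl | rfl)
      exacts [.inr ⟨true, rfl⟩, .inr ⟨false, rfl⟩]

/-- A set of arcs is a rooted subtree if their union is arcwise connected and can be presented as a
finite tree with root `q` such that all end points of the arcs are vertices. -/
def IsRootedSubtree (q : Y) (𝒥 : Set (Set Y)) : Prop :=
  IsArcwiseConnected (⋃₀ 𝒥) ∧ ∃ (W : Type) (_ : Finite W) (D : RootedArcs Y q (⋃₀ 𝒥) W),
    ∀ A ∈ 𝒥, ∀ x, IsArcEndpoint A x → x ∈ range D.vertex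

theorem IsArcFromTo.isRootedSubtree (hA : IsArcFromTo A a b) (hq : q ∈ A) :
    IsRootedSubtree q {A} := by
  obtain ⟨W, hW, D, -, ha, hb⟩ := hA.exists_rootedArcs hq
  rw [IsRootedSubtree, sUnion_singleton]
  refine ⟨hA.isArcwiseConnected, W, hW, D, ?_⟩
  rintro A rfl x hx
  rcases hA.eq_or_eq_of_isArcEndpoint hx with rfl | rfl
  exacts [ha, hb]

theorem IsRootedSubtree.insert (h𝒥 : IsRootedSubtree q 𝒥)
    (hY : ∀ S : Set Y, ¬ IsSimpleClosedCurve S) (hB : (B ∩ ⋃₀ 𝒥).Nonempty)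
    (hend : ∀ x ∈ B ∩ ⋃₀ 𝒥, IsArcEndpoint B x ∧ ∃ A ∈ 𝒥, IsArcEndpoint A x) :
    IsRootedSubtree q (insert B 𝒥) := by
  obtain ⟨hconn, W, hW, D, hD⟩ := h𝒥
  obtain ⟨x, hxB, hxZ⟩ := hB
  obtain ⟨⟨y, hxy⟩, A, hA, hAx⟩ := hend x ⟨hxB, hxZ⟩
  obtain ⟨v, rfl⟩ := hD A hA x hAx
  have hinter : B ∩ ⋃₀ 𝒥 ⊆ {D.vertex v, y} := fun z hz =>
    hxy.eq_or_eq_of_isArcEndpoint (hend z hz).1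
  have hyZ : y ∉ ⋃₀ 𝒥 := by
    intro hyZ
    obtain ⟨C, hC, hCarc⟩ := hconn hyZ hxZ hxy.ne.symm
    exact hY _ (hxy.isSimpleClosedCurve_union hCarc ((inter_subset_inter_right B hC).trans hinter))
  have hsingle : B ∩ ⋃₀ 𝒥 ⊆ {D.vertex v} := fun z hz =>
    (hinter hz).resolve_right fun h => hyZ (h ▸ hz.2)
  have hattach := D.exists_attach v (J := Unit) (A := fun _ => B) (fun _ => hxy)
    (fun _ => hsingle) Subsingleton.pairwise
  rw [iUnion_const, union_comm, range_const] at hattach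
  obtain ⟨D', -, hrange⟩ := hattach
  rw [IsRootedSubtree, sUnion_insert]
  refine ⟨hxy.isArcwiseConnected.union hconn
    (hsingle.antisymm (singleton_subset_iff.2 ⟨hxB, hxZ⟩)), W ⊕ Unit, inferInstance, D', ?_⟩
  rw [hrange]
  rintro C (rfl | hC) z hz
  · rcases hxy.eq_or_eq_of_isArcEndpoint hz with rfl | rfl
    exacts [.inl ⟨v, rfl⟩, .inr rfl]
  · exact .inl (hD C hC z hz)

end Tree

theorem exists_mem_sdiff_inter_sUnion_nonempty {Y : Type*} [TopologicalSpace Y]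
    [PreconnectedSpace Y] {𝒜 𝒥 : Set (Set Y)} (hfin : 𝒜.Finite) (hclosed : ∀ A ∈ 𝒜, IsClosed A)
    (hcover : ⋃₀ 𝒜 = univ) (h𝒥 : 𝒥 ⊆ 𝒜) (hne : (⋃₀ 𝒥).Nonempty) (hne' : (⋃₀ (𝒜 \ 𝒥)).Nonempty) :
    ∃ B ∈ 𝒜 \ 𝒥, (B ∩ ⋃₀ 𝒥).Nonempty := by
  have hclosed' {ℬ : Set (Set Y)} (hℬ : ℬ ⊆ 𝒜) : IsClosed (⋃₀ ℬ) := by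
    rw [sUnion_eq_biUnion]
    exact (hfin.subset hℬ).isClosed_biUnion fun A hA => hclosed A (hℬ hA)
  have hunion : ⋃₀ 𝒥 ∪ ⋃₀ (𝒜 \ 𝒥) = univ := by
    rw [← sUnion_union, union_sdiff_cancel h𝒥, hcover]
  obtain ⟨x, -, hx, B, hB, hxB⟩ := isPreconnected_closed_iff.1 isPreconnected_univ _ _
    (hclosed' h𝒥) (hclosed' sdiff_subset) hunion.superset (by rwa [univ_inter])
    (by rwa [univ_inter])
  exact ⟨B, hB, x, hxB, hx⟩

theorem IsTree.exists_rootedArcs {Y : Type*} [MetricSpace Y] (hY : IsTree Y) (q : Y) :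
    ∃ (W : Type) (_ : Finite W), Nonempty (RootedArcs Y q univ W) := by
  obtain ⟨⟨-, _, -, 𝒜, harc, hcover, hend⟩, hcurve⟩ := hY
  obtain ⟨A₀, hA₀, hqA₀⟩ := mem_sUnion.1 (hcover.superset (mem_univ q))
  have hbase : IsRootedSubtree q {A₀} := by
    obtain ⟨a, b, h⟩ := (harc A₀ hA₀).exists_isArcFromTo
    exact h.isRootedSubtree hqA₀
  obtain ⟨𝒥, hle, h𝒥⟩ := (𝒜.finite_toSet.finite_subsets.subset
    (inter_subset_left (t := {𝒥 | IsRootedSubtree q 𝒥}))).exists_le_maximal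
    ⟨singleton_subset_iff.2 hA₀, hbase⟩
  have hall : 𝒥 = 𝒜 := by
    refine h𝒥.prop.1.antisymm fun B₀ hB₀ => ?_
    by_contra hB₀𝒥
    obtain ⟨a, b, hab⟩ := (harc B₀ hB₀).exists_isArcFromTo
    obtain ⟨B, hB, hmeet⟩ := exists_mem_sdiff_inter_sUnion_nonempty 𝒜.finite_toSet
      (fun A hA => let ⟨_, _, h⟩ := (harc A hA).exists_isArcFromTo; h.isClosed) hcover h𝒥.prop.1
      ⟨q, A₀, hle rfl, hqA₀⟩ ⟨a, B₀, ⟨hB₀, hB₀𝒥⟩, hab.left_mem⟩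
    refine hB.2 (h𝒥.le_of_ge ⟨insert_subset hB.1 h𝒥.prop.1, h𝒥.prop.2.insert hcurve hmeet ?_⟩
      (subset_insert _ _) (mem_insert _ _))
    rintro x ⟨hxB, A, hA, hxA⟩
    obtain ⟨hB', hA'⟩ := hend B hB.1 A (h𝒥.prop.1 hA) (fun h => hB.2 (h ▸ hA)) x ⟨hxB, hxA⟩
    exact ⟨hB', A, hA, hA'⟩
  obtain ⟨-, W, hW, D, -⟩ := h𝒥.prop.2
  rw [hall, hcover] at D
  exact ⟨W, hW, ⟨D⟩⟩

theorem IsSimpleNod.exists_rootedArcs {X : Type*} [TopologicalSpace X] [T2Space X] {n : ℕ} {v : X}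
    (hX : IsSimpleNod n (univ : Set X) v) (hn : 3 ≤ n) (p : X) :
    ∃ (W : Type) (_ : Finite W) (D : RootedArcs X p univ W), D.IsNodForest := by
  obtain ⟨-, A, -, hcover, hend, hinter⟩ := hX
  choose b hb using hend
  obtain ⟨i, hp⟩ := mem_iUnion.1 (hcover.superset (mem_univ p))
  obtain ⟨W, hW, D, hroots, ⟨a, ha⟩, -⟩ := (hb i).exists_rootedArcs hp
  obtain ⟨D', hD', -⟩ := D.exists_attach a (J := {j // j ≠ i}) (A := fun j => A j)
    (b := fun j => b j) (fun j => ha ▸ hb j) (fun j => ha ▸ (hinter _ _ j.2).subset)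
    fun j k hjk => ha ▸ (hinter _ _ fun h => hjk (Subtype.ext h)).subset
  have hunion : A i ∪ ⋃ j : {j // j ≠ i}, A j = univ := by
    refine eq_univ_of_forall fun x => ?_
    obtain ⟨j, hj⟩ := mem_iUnion.1 (hcover.superset (mem_univ x))
    rcases eq_or_ne j i with rfl | hji
    exacts [.inl hj, .inr (mem_iUnion.2 ⟨⟨j, hji⟩, hj⟩)]
  have hcard : 2 ≤ Nat.card {j // j ≠ i} := by
    rw [Nat.card_eq_fintype_card, Fintype.card_subtype_compl, Fintype.card_subtype_eq,
      Fintype.card_fin]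
    omega
  have hnod := RootedForest.isNodForest_attach hroots a {j // j ≠ i} hcard
  rw [← hD'] at hnod
  rw [← hunion]
  exact ⟨W ⊕ {j // j ≠ i}, inferInstance, D', hnod⟩

theorem statement9 {X : Type u} [MetricSpace X] (hX : IsTree X)
    (n : ℕ) (hn : 3 ≤ n) (v : X) (hXnod : IsSimpleNod n (univ : Set X) v)
    (p : X) : UniqueHyperspaceInTrees X p := by
  rintro Y _ hY q ⟨e⟩
  obtain ⟨W, _, D, hD⟩ := hXnod.exists_rootedArcs hn p
  obtain ⟨W₀, _, ⟨D₀⟩⟩ := hY.exists_rootedArcs q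
  obtain ⟨W', _, D', hD'⟩ := D₀.exists_isReduced
  have hcards : D.boundaryCards = D'.boundaryCards := by
    rw [← D.cellDims_CP, ← D'.cellDims_CP, cellDims_eq_of_homeomorph e]
  exact D.exists_homeomorph D' (hD.isomorphic_of_isReduced hD' hcards)
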